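/- arXiv:2307.13826 — 3 statements merged into one kernel-verified Lean document; each statement's English description precedes it below -/
import Mathlib

section
/- For any f^{(k+1)}: P_{k+1} → ℝ with projection f^{(k)} = P^↑_k f^{(k+1)}, the Dirichlet forms satisfy E_{P_{k+1}^∇}(f^{(k+1)}) ≥ (2γ_{k-1} − 1)·E_{P_k^∇}(f^{(k)}). -/
open Finset
open scoped Classical

variable {E : Type*} [Fintype E] [DecidableEq E]

/-- `μ` is a probability distribution on the size-`n` faces (top level) of a pure
weighted simplicial complex with ground set `E`. -/
def IsDistOn (μ : Finset E → ℝ) (n : ℕ) : Prop :=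
  (∀ S, 0 ≤ μ S) ∧ (∀ S, S.card ≠ n → μ S = 0) ∧ (∑ S, μ S = 1)

/-- The induced distribution `π_k` on level `k`:
`π_k(S) = C(n,k)⁻¹ · Σ_{T ⊇ S} μ(T)` for `|S| = k`, and `0` otherwise. -/
noncomputable def piLev (μ : Finset E → ℝ) (n k : ℕ) (S : Finset E) : ℝ :=
  if S.card = k then (n.choose k : ℝ)⁻¹ * ∑ T ∈ univ.filter (fun T => S ⊆ T), μ T else 0

/-- The stationary distribution `π_{S,1}` of the local walk at the face `S`:
the one-element conditional distribution above `S`. -/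
noncomputable def piLoc (μ : Finset E → ℝ) (n : ℕ) (S : Finset E) (a : E) : ℝ :=
  piLev μ n (S.card + 1) (insert a S) / ((S.card + 1) * piLev μ n S.card S)

/-- The local walk `Q_S` at a face `S`:
`Q_S(a,b) = π_{i+2}(S∪a∪b) / ((i+2)·π_{i+1}(S∪a))` (0 when `a = b`). -/
noncomputable def localQ (μ : Finset E → ℝ) (n : ℕ) (S : Finset E) : Matrix E E ℝ :=
  Matrix.of fun a b =>
    piLev μ n (S.card + 2) (insert b (insert a S)) /
      ((S.card + 2) * piLev μ n (S.card + 1) (insert a S))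

/-- The down operator `P↓_k` from level `k` to level `k−1`. -/
noncomputable def Pdown (k : ℕ) : Matrix (Finset E) (Finset E) ℝ :=
  Matrix.of fun S T => if T ⊆ S ∧ S.card = k ∧ T.card = k - 1 then (k : ℝ)⁻¹ else 0

/-- The up operator `P↑_k` from level `k` to level `k+1`. -/
noncomputable def Pup (μ : Finset E → ℝ) (n k : ℕ) : Matrix (Finset E) (Finset E) ℝ :=
  Matrix.of fun S T => if S ⊆ T ∧ S.card = k ∧ T.card = k + 1 then
    piLev μ n (k + 1) T / (((k : ℝ) + 1) * piLev μ n k S) else 0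

/-- The multi-level down operator from level `i` to level `j ≤ i`
(remove `i−j` uniformly random elements). -/
noncomputable def PdownM (i j : ℕ) : Matrix (Finset E) (Finset E) ℝ :=
  Matrix.of fun S T => if T ⊆ S ∧ S.card = i ∧ T.card = j then (i.choose j : ℝ)⁻¹ else 0

/-- The multi-level up operator from level `j` to level `i ≥ j`
(add `i−j` elements according to the conditional distribution). -/
noncomputable def PupM (μ : Finset E → ℝ) (n j i : ℕ) : Matrix (Finset E) (Finset E) ℝ :=
  Matrix.of fun S T => if S ⊆ T ∧ S.card = j ∧ T.card = i then
    piLev μ n i T / ((i.choose j : ℝ) * piLev μ n j S) else 0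

/-- Dirichlet form `E_P(f) = (1/2)·Σ_{a,b} π(a)P(a,b)(f(a)−f(b))²`. -/
noncomputable def dirichletForm {ι : Type*} [Fintype ι] (π : ι → ℝ)
    (P : Matrix ι ι ℝ) (f : ι → ℝ) : ℝ :=
  (1 / 2) * ∑ a, ∑ b, π a * P a b * (f a - f b) ^ 2

/-- Variance `Var_π(f)` with respect to a weight `π` summing to 1. -/
noncomputable def varw {ι : Type*} [Fintype ι] (π : ι → ℝ) (f : ι → ℝ) : ℝ :=
  ∑ a, π a * (f a - ∑ b, π b * f b) ^ 2

lemma aux_sum_up (k : ℕ) (S : Finset E) (hS : S.card = k) (X : Finset E → ℝ) :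
    (∑ T : Finset E, if S ⊆ T ∧ T.card = k + 1 then X T else 0) =
      ∑ b : E, if b ∉ S then X (insert b S) else 0 := by
  rw [← Finset.sum_filter, ← Finset.sum_filter]
  symm
  refine Finset.sum_bij (fun b _ => insert b S) ?_ ?_ ?_ ?_
  · intro b hb
    simp only [mem_filter, mem_univ, true_and] at hb ⊢
    exact ⟨Finset.subset_insert _ _, by rw [Finset.card_insert_of_notMem hb, hS]⟩
  · intro a ha b hb h
    simp only [mem_filter, mem_univ, true_and] at ha hb
    have : a ∈ insert b S := h ▸ Finset.mem_insert_self a S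
    rcases Finset.mem_insert.1 this with h | h
    · exact h
    · exact absurd h ha
  · intro T hT
    simp only [mem_filter, mem_univ, true_and] at hT
    obtain ⟨b, hb, h⟩ := (Finset.exists_eq_insert_iff (s := S) (t := T)).2 ⟨hT.1, by omega⟩
    exact ⟨b, by simpa using hb, h⟩
  · intros; rfl

lemma aux_card_sub (k : ℕ) (T : Finset E) (hT : T.card = k + 1) :
    (univ.filter (fun S : Finset E => S ⊆ T ∧ S.card = k)).card = k + 1 := by
  have : univ.filter (fun S : Finset E => S ⊆ T ∧ S.card = k) = T.powersetCard k := by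
    ext S; simp [Finset.mem_powersetCard]
  rw [this, Finset.card_powersetCard, hT]
  simp

lemma aux_double (k : ℕ) (X : Finset E → ℝ) :
    (∑ S : Finset E, if S.card = k then (∑ b : E, if b ∉ S then X (insert b S) else 0) else 0) =
      ∑ T : Finset E, if T.card = k + 1 then ((k : ℝ) + 1) * X T else 0 := by
  have h1 : (∑ S : Finset E, if S.card = k then
      (∑ b : E, if b ∉ S then X (insert b S) else 0) else 0) =
      ∑ S : Finset E, ∑ T : Finset E,
        if (S ⊆ T ∧ S.card = k) ∧ T.card = k + 1 then X T else 0 := by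
    refine Finset.sum_congr rfl fun S _ => ?_
    split_ifs with hS
    · rw [← aux_sum_up k S hS]
      refine Finset.sum_congr rfl fun T _ => ?_
      simp [hS]
    · simp [hS]
  rw [h1, Finset.sum_comm]
  refine Finset.sum_congr rfl fun T _ => ?_
  split_ifs with hT
  · simp only [hT, and_true]
    rw [← Finset.sum_filter, Finset.sum_const, aux_card_sub k T hT, nsmul_eq_mul]
    push_cast; ring
  · simp [hT]

lemma piLev_nonneg' (μ : Finset E → ℝ) (n k : ℕ) (hμ : IsDistOn μ n) (S : Finset E) :
    0 ≤ piLev μ n k S := by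
  unfold piLev
  split_ifs
  · exact mul_nonneg (by positivity) (Finset.sum_nonneg fun T _ => hμ.1 T)
  · exact le_rfl

lemma aux_row (μ : Finset E → ℝ) (n j : ℕ) (hj : j + 1 ≤ n) (hμ : IsDistOn μ n)
    (S : Finset E) (hS : S.card = j) :
    ∑ b : E, piLev μ n (j + 1) (insert b S) = ((j : ℝ) + 1) * piLev μ n j S := by
  have h1 : ∀ b : E, piLev μ n (j + 1) (insert b S) =
      (n.choose (j+1) : ℝ)⁻¹ * ∑ T : Finset E, if S ⊆ T ∧ b ∈ T \ S then μ T else 0 := by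
    intro b
    by_cases hb : b ∈ S
    · rw [Finset.insert_eq_of_mem hb]
      simp [piLev, hS, hb]
    · simp only [piLev, Finset.card_insert_of_notMem hb, hS, if_true]
      rw [Finset.sum_filter]
      congr 1
      refine Finset.sum_congr rfl fun T _ => ?_
      simp [Finset.insert_subset_iff, hb, and_comm]
  have h2 : ∀ T : Finset E, (∑ b : E, if S ⊆ T ∧ b ∈ T \ S then μ T else 0) =
      ((n : ℝ) - j) * (if S ⊆ T then μ T else 0) := by
    intro T
    by_cases hST : S ⊆ T
    · simp only [hST, true_and, if_true]
      rw [← Finset.sum_filter, Finset.sum_const, nsmul_eq_mul]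
      by_cases hT : T.card = n
      · have : (univ.filter (fun b => b ∈ T \ S)) = T \ S := by ext; simp
        rw [this, Finset.card_sdiff_of_subset hST, hT, hS, Nat.cast_sub (by omega)]
      · rw [hμ.2.1 T hT]; simp
    · simp [hST]
  simp_rw [h1]
  rw [← Finset.mul_sum, Finset.sum_comm]
  simp_rw [h2]
  rw [← Finset.mul_sum, ← Finset.sum_filter]
  simp only [piLev, hS, if_true]
  have h3 : (n.choose (j+1) : ℝ) * (j + 1) = n.choose j * ((n:ℝ) - j) := by
    have := Nat.choose_succ_right_eq n j
    rw [← Nat.cast_sub (by omega)]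
    exact_mod_cast this
  have p1 : (n.choose (j+1) : ℝ) ≠ 0 := by
    exact_mod_cast (Nat.choose_pos (by omega)).ne'
  have p2 : (n.choose j : ℝ) ≠ 0 := by
    exact_mod_cast (Nat.choose_pos (by omega)).ne'
  field_simp
  linear_combination (-(∑ T with S ⊆ T, μ T)) * h3

lemma piLev_insert_mem (μ : Finset E → ℝ) (n : ℕ) (S : Finset E) (b : E) (hb : b ∈ S) :
    piLev μ n (S.card + 1) (insert b S) = 0 := by
  rw [Finset.insert_eq_of_mem hb]; simp [piLev]

lemma piLoc_mem (μ : Finset E → ℝ) (n : ℕ) (S : Finset E) (b : E) (hb : b ∈ S) :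
    piLoc μ n S b = 0 := by
  simp [piLoc, piLev_insert_mem μ n S b hb]

lemma Pup_sum (μ : Finset E → ℝ) (n k : ℕ) (S : Finset E) (hS : S.card = k) (F : Finset E → ℝ) :
    ∑ T, Pup μ n k S T * F T = ∑ b, piLoc μ n S b * F (insert b S) := by
  have : ∀ T, Pup μ n k S T * F T = if S ⊆ T ∧ T.card = k + 1 then
      piLev μ n (k + 1) T / (((k : ℝ) + 1) * piLev μ n k S) * F T else 0 := by
    intro T; simp [Pup, hS, ite_mul]
  simp_rw [this]
  rw [aux_sum_up k S hS]
  refine Finset.sum_congr rfl fun b _ => ?_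
  split_ifs with hb
  · rw [piLoc_mem μ n S b hb]; simp
  · simp [piLoc, hS]

lemma piLoc_row (μ : Finset E → ℝ) (n j : ℕ) (hj : j + 1 ≤ n) (hμ : IsDistOn μ n)
    (S : Finset E) (hS : S.card = j) (h : piLev μ n j S ≠ 0) :
    ∑ b : E, piLoc μ n S b = 1 := by
  unfold piLoc
  rw [← Finset.sum_div, hS, aux_row μ n j hj hμ S hS]
  exact div_self (mul_ne_zero (by positivity) h)

lemma piLev_insert_zero (μ : Finset E → ℝ) (n j : ℕ) (hj : j + 1 ≤ n) (hμ : IsDistOn μ n)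
    (S : Finset E) (hS : S.card = j) (h : piLev μ n j S = 0) (b : E) :
    piLev μ n (j + 1) (insert b S) = 0 := by
  have := aux_row μ n j hj hμ S hS
  rw [h, mul_zero, Finset.sum_eq_zero_iff_of_nonneg
    (fun b _ => piLev_nonneg' μ n (j+1) hμ _)] at this
  exact this b (mem_univ b)

lemma piLev_mul_piLoc (μ : Finset E → ℝ) (n j : ℕ) (hj : j + 1 ≤ n) (hμ : IsDistOn μ n)
    (S : Finset E) (hS : S.card = j) (b : E) :
    piLev μ n j S * piLoc μ n S b = piLev μ n (j + 1) (insert b S) / (j + 1) := by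
  unfold piLoc
  rw [hS]
  by_cases h : piLev μ n j S = 0
  · rw [piLev_insert_zero μ n j hj hμ S hS h]; simp
  · field_simp

lemma avg (μ : Finset E → ℝ) (n j : ℕ) (hj : j + 1 ≤ n) (hμ : IsDistOn μ n)
    (G : Finset E → ℝ) :
    ∑ T : Finset E, piLev μ n (j + 1) T * G T =
      ∑ S : Finset E, piLev μ n j S * ∑ b, piLoc μ n S b * G (insert b S) := by
  have h := aux_double j (fun T : Finset E => piLev μ n (j+1) T * G T / ((j:ℝ) + 1))
  have e1 : ∑ T : Finset E, piLev μ n (j + 1) T * G T =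
     ∑ T : Finset E, if T.card = j + 1 then ((j : ℝ) + 1) *
      (piLev μ n (j+1) T * G T / ((j:ℝ) + 1)) else 0 := by
    refine Finset.sum_congr rfl fun T _ => ?_
    split_ifs with hT
    · field_simp
    · simp [piLev, hT]
  rw [e1, ← h]
  refine Finset.sum_congr rfl fun S _ => ?_
  split_ifs with hS
  · rw [Finset.mul_sum]
    refine Finset.sum_congr rfl fun b _ => ?_
    rw [← mul_assoc, piLev_mul_piLoc μ n j hj hμ S hS]
    split_ifs with hb
    · subst hS
      rw [piLev_insert_mem μ n S b hb]; simp
    · ring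
  · simp [piLev, hS]

lemma dir_eq (μ : Finset E → ℝ) (n j : ℕ) (hj : j + 1 ≤ n) (hμ : IsDistOn μ n)
    (f : Finset E → ℝ) :
    dirichletForm (piLev μ n (j + 1)) (Pdown (j + 1) * Pup μ n j) f =
      ∑ S : Finset E, piLev μ n j S * ((1 / 2) * ∑ a, ∑ b, piLoc μ n S a * piLoc μ n S b *
        (f (insert a S) - f (insert b S)) ^ 2) := by
  unfold dirichletForm
  have e1 : (∑ a, ∑ b, piLev μ n (j + 1) a * (Pdown (j + 1) * Pup μ n j : Matrix (Finset E) (Finset E) ℝ) a b * (f a - f b) ^ 2)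
    = ∑ S : Finset E, ∑ a : Finset E, piLev μ n (j+1) a * Pdown (j+1) a S *
        ∑ b, Pup μ n j S b * (f a - f b) ^ 2 := by
    conv_rhs => rw [Finset.sum_comm]
    refine Finset.sum_congr rfl fun a _ => ?_
    simp_rw [Matrix.mul_apply, Finset.mul_sum, Finset.sum_mul]
    rw [Finset.sum_comm]
    refine Finset.sum_congr rfl fun S _ => Finset.sum_congr rfl fun b _ => ?_
    ring
  rw [e1, Finset.mul_sum]
  refine Finset.sum_congr rfl fun S _ => ?_
  by_cases hS : S.card = j
  · have e2 : ∀ a : Finset E, piLev μ n (j+1) a * Pdown (j+1) a S *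
        ∑ b, Pup μ n j S b * (f a - f b) ^ 2 = if S ⊆ a ∧ a.card = j + 1 then
        piLev μ n (j+1) a * ((j:ℝ)+1)⁻¹ * ∑ b, piLoc μ n S b * (f a - f (insert b S)) ^ 2
        else 0 := by
      intro a
      rw [Pup_sum μ n j S hS (fun b => (f a - f b)^2)]
      simp only [Pdown, Matrix.of_apply, hS, Nat.add_sub_cancel, and_true, Nat.cast_add,
        Nat.cast_one]
      split_ifs <;> simp
    simp_rw [e2]
    rw [aux_sum_up j S hS, ← mul_assoc, mul_comm _ (1/2 : ℝ), mul_assoc]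
    congr 1
    rw [Finset.mul_sum]
    refine Finset.sum_congr rfl fun a _ => ?_
    have e3 : (∑ b, piLoc μ n S a * piLoc μ n S b * (f (insert a S) - f (insert b S)) ^ 2) =
      piLoc μ n S a * ∑ b, piLoc μ n S b * (f (insert a S) - f (insert b S)) ^ 2 := by
      rw [Finset.mul_sum]
      exact Finset.sum_congr rfl fun b _ => by ring
    rw [e3]
    split_ifs with ha
    · rw [piLoc_mem μ n S a ha]; simp
    · rw [← mul_assoc, piLev_mul_piLoc μ n j hj hμ S hS]; rfl
  · simp [piLev, Pdown, hS]

lemma var_eq {ι : Type*} [Fintype ι] (p : ι → ℝ) (hp : ∑ a, p a = 1) (g : ι → ℝ) :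
    (1 / 2) * ∑ a, ∑ b, p a * p b * (g a - g b) ^ 2 = ∑ a, p a * g a ^ 2 - (∑ a, p a * g a)^2 := by
  have e : ∀ a, ∑ b, p a * p b * (g a - g b) ^ 2 =
     p a * g a ^ 2 * (∑ b, p b) - 2 * (p a * g a) * (∑ b, p b * g b) + p a * ∑ b, p b * g b ^ 2 := by
    intro a
    simp_rw [Finset.mul_sum]
    rw [← Finset.sum_sub_distrib, ← Finset.sum_add_distrib]
    exact Finset.sum_congr rfl fun b _ => by ring
  simp_rw [e]
  rw [Finset.sum_add_distrib, Finset.sum_sub_distrib, ← Finset.sum_mul, ← Finset.sum_mul,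
    ← Finset.sum_mul, ← Finset.mul_sum, hp]
  ring

lemma varw_eq {ι : Type*} [Fintype ι] (p : ι → ℝ) (hp : ∑ a, p a = 1) (g : ι → ℝ) :
    varw p g = ∑ a, p a * g a ^ 2 - (∑ a, p a * g a)^2 := by
  unfold varw
  set m := ∑ a, p a * g a with hm
  have e : ∀ a, p a * (g a - m)^2 = p a * g a ^ 2 - 2 * m * (p a * g a) + p a * m^2 := by
    intro a; ring
  simp_rw [e]
  rw [Finset.sum_add_distrib, Finset.sum_sub_distrib, ← Finset.mul_sum, ← Finset.sum_mul, hp, ← hm]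
  ring

/-- local inequality -/
lemma local_ineq {ι : Type*} [Fintype ι] (p : ι → ℝ) (W : ι → ι → ℝ) (F : ι → ι → ℝ) (g : ι → ℝ)
    (hp : ∑ a, p a = 1) (hW : ∀ a b, 0 ≤ W a b) (hWs : ∀ a b, W a b = W b a)
    (hFs : ∀ a b, F a b = F b a) (hrow : ∀ a, ∑ b, W a b = p a)
    (hg : ∀ a, ∑ b, W a b * F a b = p a * g a) :
    (∑ a, ∑ b, W a b * (g a - g b) ^ 2) - (∑ a, p a * g a ^ 2 - (∑ a, p a * g a)^2) ≤
      ∑ a, ∑ b, W a b * F a b ^ 2 - ∑ a, p a * g a ^ 2 := by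
  set m := ∑ a, p a * g a with hm
  have key : 0 ≤ ∑ a, ∑ b, W a b * (F a b - g a - g b + m) ^ 2 :=
    Finset.sum_nonneg fun a _ => Finset.sum_nonneg fun b _ => mul_nonneg (hW a b) (sq_nonneg _)
  -- basic sums
  have s1 : ∑ a, ∑ b, W a b * g a ^ 2 = ∑ a, p a * g a ^ 2 :=
    Finset.sum_congr rfl fun a _ => by rw [← Finset.sum_mul, hrow]
  have s2 : ∑ a, ∑ b, W a b * g b ^ 2 = ∑ a, p a * g a ^ 2 := by
    rw [Finset.sum_comm, ← s1]
    exact Finset.sum_congr rfl fun a _ => Finset.sum_congr rfl fun b _ => by rw [hWs]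
  have s3 : ∑ a, ∑ b, W a b * F a b * g a = ∑ a, p a * g a ^ 2 :=
    Finset.sum_congr rfl fun a _ => by rw [← Finset.sum_mul, hg]; ring
  have s4 : ∑ a, ∑ b, W a b * F a b * g b = ∑ a, p a * g a ^ 2 := by
    rw [Finset.sum_comm, ← s3]
    exact Finset.sum_congr rfl fun a _ => Finset.sum_congr rfl fun b _ => by rw [hWs, hFs]
  have s5 : ∑ a, ∑ b, W a b * g a = m :=
    Finset.sum_congr rfl fun a _ => by rw [← Finset.sum_mul, hrow]
  have s6 : ∑ a, ∑ b, W a b * g b = m := by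
    rw [Finset.sum_comm, ← s5]
    exact Finset.sum_congr rfl fun a _ => Finset.sum_congr rfl fun b _ => by rw [hWs]
  have s7 : ∑ a, ∑ b, W a b * F a b = m :=
    Finset.sum_congr rfl fun a _ => hg a
  have s8 : ∑ a, ∑ b, W a b = 1 := by simp_rw [hrow]; exact hp
  have x1 : ∑ a, ∑ b, W a b * (g a - g b) ^ 2 = ∑ a, ∑ b, W a b * g a ^ 2 +
      ∑ a, ∑ b, W a b * g b ^ 2 - 2 * ∑ a, ∑ b, W a b * (g a * g b) := by
    simp_rw [Finset.mul_sum, ← Finset.sum_add_distrib, ← Finset.sum_sub_distrib]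
    exact Finset.sum_congr rfl fun a _ => Finset.sum_congr rfl fun b _ => by ring
  have x2 : ∑ a, ∑ b, W a b * (F a b - g a - g b + m) ^ 2 =
      ∑ a, ∑ b, W a b * F a b ^ 2 + ∑ a, ∑ b, W a b * g a ^ 2 +
      ∑ a, ∑ b, W a b * g b ^ 2 + m ^ 2 * ∑ a, ∑ b, W a b
      + 2 * ∑ a, ∑ b, W a b * (g a * g b) + 2 * m * ∑ a, ∑ b, W a b * F a b
      - 2 * ∑ a, ∑ b, W a b * F a b * g a - 2 * ∑ a, ∑ b, W a b * F a b * g b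
      - 2 * m * ∑ a, ∑ b, W a b * g a - 2 * m * ∑ a, ∑ b, W a b * g b := by
    simp_rw [Finset.mul_sum, ← Finset.sum_add_distrib, ← Finset.sum_sub_distrib]
    exact Finset.sum_congr rfl fun a _ => Finset.sum_congr rfl fun b _ => by ring
  rw [x2, s1, s2, s3, s4, s5, s6, s7, s8] at key
  rw [x1, s1, s2]
  linarith

lemma localQ_eq (μ : Finset E → ℝ) (n : ℕ) (S : Finset E) (a b : E) (ha : a ∉ S) :
    localQ μ n S a b = piLoc μ n (insert a S) b := by
  simp only [localQ, piLoc, Matrix.of_apply, Finset.card_insert_of_notMem ha]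
  push_cast
  congr 2
  ring

/-- for any `f^{(k+1)}` on level `k+1` with projection
`f^{(k)} = P↑_k f^{(k+1)}`, the down-up Dirichlet forms satisfy
`E_{P_{k+1}^∇}(f^{(k+1)}) ≥ (2γ_{k-1} − 1)·E_{P_k^∇}(f^{(k)})`, where `γ_{k-1}`
lower bounds the spectral gap of every local walk at a face of size `k−1`. -/
theorem downup_dirichlet_improved_step (μ : Finset E → ℝ) (n k : ℕ)
    (hk : 1 ≤ k) (hkn : k + 1 ≤ n) (hμ : IsDistOn μ n) (γ : ℝ)
    (hloc : ∀ η : Finset E, η.card = k - 1 → 0 < piLev μ n (k - 1) η →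
      ∀ g : E → ℝ, γ * varw (piLoc μ n η) g ≤
        dirichletForm (piLoc μ n η) (localQ μ n η) g)
    (f : Finset E → ℝ) :
    (2 * γ - 1) *
        dirichletForm (piLev μ n k) (Pdown k * Pup μ n (k - 1)) ((Pup μ n k).mulVec f) ≤
      dirichletForm (piLev μ n (k + 1)) (Pdown (k + 1) * Pup μ n k) f := by
  obtain ⟨j, rfl⟩ : ∃ j, k = j + 1 := ⟨k - 1, by omega⟩
  simp only [Nat.add_sub_cancel] at hloc ⊢
  rw [dir_eq μ n j (by omega) hμ, dir_eq μ n (j+1) hkn hμ, avg μ n j (by omega) hμ,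
    Finset.mul_sum]
  refine Finset.sum_le_sum fun η _ => ?_
  by_cases hη : η.card = j
  swap
  · simp [piLev, hη]
  rcases (piLev_nonneg' μ n j hμ η).eq_or_lt with h0 | hpos
  · simp [← h0]
  set h := (Pup μ n (j+1)).mulVec f with hh
  have hmul : ∀ S : Finset E, S.card = j + 1 → h S = ∑ b, piLoc μ n S b * f (insert b S) :=
    fun S hS => Pup_sum μ n (j+1) S hS f
  have hp := piLoc_row μ n j (by omega) hμ η hη hpos.ne'
  have hl := hloc η hη hpos (fun a => h (insert a η))
  rw [varw_eq _ hp] at hl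
  rw [var_eq (piLoc μ n η) hp (fun a => h (insert a η))]
  unfold dirichletForm at hl
  -- symmetric weights
  have hW : ∀ a b, piLoc μ n η a * localQ μ n η a b =
      piLev μ n (j + 2) (insert b (insert a η)) / (((j:ℝ)+1) * (j + 2) * piLev μ n j η) := by
    intro a b
    by_cases ha : a ∈ η
    · rw [piLoc_mem μ n η a ha, Finset.insert_eq_of_mem ha]
      have : (insert b η).card ≠ j + 2 := by
        have := Finset.card_insert_le b η
        omega
      simp [piLev, this]
    · have hc : (insert a η).card = j + 1 := by rw [Finset.card_insert_of_notMem ha, hη]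
      have h1 := piLev_mul_piLoc μ n j (by omega) hμ η hη a
      have h2 := piLev_mul_piLoc μ n (j+1) hkn hμ (insert a η) hc b
      rw [localQ_eq μ n η a b ha]
      have e1 : piLoc μ n η a = piLev μ n (j+1) (insert a η) / (j + 1) / piLev μ n j η := by
        rw [← h1]; field_simp
      have e2 : piLev μ n (j + 2) (insert b (insert a η)) =
          ((j:ℝ) + 2) * (piLev μ n (j + 1) (insert a η) * piLoc μ n (insert a η) b) := by
        rw [h2]; push_cast
        have : (j:ℝ) + 1 + 1 ≠ 0 := by positivity
        field_simp
        ring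
      rw [e1, e2]
      have : (j:ℝ) + 2 ≠ 0 := by positivity
      field_simp
  have hQ : ∀ a, ∀ G : E → ℝ, piLoc μ n η a * ∑ b, piLoc μ n (insert a η) b * G b =
      ∑ b, piLoc μ n η a * localQ μ n η a b * G b := by
    intro a G
    rw [Finset.mul_sum]
    refine Finset.sum_congr rfl fun b _ => ?_
    by_cases ha : a ∈ η
    · simp [piLoc_mem μ n η a ha]
    · rw [localQ_eq μ n η a b ha]; ring
  have hnz : ∀ a, piLoc μ n η a ≠ 0 → a ∉ η ∧ (insert a η).card = j + 1 ∧
      piLev μ n (j+1) (insert a η) ≠ 0 := by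
    intro a hne
    have ha : a ∉ η := fun ha => hne (piLoc_mem μ n η a ha)
    refine ⟨ha, by rw [Finset.card_insert_of_notMem ha, hη], fun hz => hne ?_⟩
    unfold piLoc
    rw [hη, hz]; simp
  have hrow : ∀ a, ∑ b, piLoc μ n η a * localQ μ n η a b = piLoc μ n η a := by
    intro a
    by_cases hne : piLoc μ n η a = 0
    · simp [hne]
    · obtain ⟨ha, hc, hz⟩ := hnz a hne
      have := hQ a (fun _ => 1)
      simp only [mul_one] at this
      rw [← this, piLoc_row μ n (j+1) hkn hμ _ hc hz, mul_one]
  have hg : ∀ a, ∑ b, piLoc μ n η a * localQ μ n η a b * f (insert b (insert a η)) =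
      piLoc μ n η a * h (insert a η) := by
    intro a
    by_cases hne : piLoc μ n η a = 0
    · simp [hne]
    · obtain ⟨ha, hc, hz⟩ := hnz a hne
      rw [hmul _ hc, hQ a (fun b => f (insert b (insert a η)))]
  have hloc2 := local_ineq (piLoc μ n η) (fun a b => piLoc μ n η a * localQ μ n η a b)
    (fun a b => f (insert b (insert a η))) (fun a => h (insert a η)) hp
    (fun a b => by
      simp only [hW]
      exact div_nonneg (piLev_nonneg' μ n _ hμ _) (by positivity))
    (fun a b => by simp only [hW]; rw [Finset.insert_comm])
    (fun a b => by rw [Finset.insert_comm])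
    hrow hg
  have hA : ∑ a, piLoc μ n η a * ((1 / 2) * ∑ b, ∑ c, piLoc μ n (insert a η) b *
      piLoc μ n (insert a η) c * (f (insert b (insert a η)) - f (insert c (insert a η))) ^ 2) =
      ∑ a, ∑ b, piLoc μ n η a * localQ μ n η a b * f (insert b (insert a η)) ^ 2 -
        ∑ a, piLoc μ n η a * h (insert a η) ^ 2 := by
    rw [← Finset.sum_sub_distrib]
    refine Finset.sum_congr rfl fun a _ => ?_
    by_cases hne : piLoc μ n η a = 0
    · simp [hne]
    · obtain ⟨ha, hc, hz⟩ := hnz a hne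
      rw [var_eq (piLoc μ n (insert a η)) (piLoc_row μ n (j+1) hkn hμ _ hc hz)
        (fun b => f (insert b (insert a η))), ← hmul _ hc, mul_sub,
        hQ a (fun b => f (insert b (insert a η)) ^ 2)]
  rw [hA, mul_left_comm]
  refine mul_le_mul_of_nonneg_left ?_ hpos.le
  linarith
end

section
/- Improved Random Walk Theorem: for 0 ≤ ℓ < n, the spectral gap of the multi-level down-up walk from level n to ℓ satisfies γ(P_{n,ℓ}^∇) ≥ (Σ_{i=ℓ}^{n-1} Γ_i)/(Σ_{i=0}^{n-1} Γ_i), where Γ_0 = 1 and Γ_i = ∏_{j=0}^{i-1}(2γ_j − 1), with γ_j the minimum local-walk spectral gap over faces of size j. -/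
open Finset
open scoped Classical

variable {E : Type*} [Fintype E] [DecidableEq E]

/-- sum of `g` over supersets of `S`. -/
noncomputable def upS (g : Finset E → ℝ) (S : Finset E) : ℝ :=
  ∑ T ∈ univ.filter (fun T => S ⊆ T), g T

/-- `upS` restricted to level `k`. -/
noncomputable def upU (g : Finset E → ℝ) (k : ℕ) (S : Finset E) : ℝ :=
  if S.card = k then upS g S else 0

theorem upS_step (g : Finset E → ℝ) (n k : ℕ) (hg : ∀ T, T.card ≠ n → g T = 0)
    (S : Finset E) (hS : S.card = k) :
    ∑ a, upU g (k+1) (insert a S) = ((n:ℝ) - k) * upS g S := by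
  have h1 : ∀ a, upU g (k+1) (insert a S) =
      ∑ T, if S ⊆ T ∧ a ∈ T \ S then g T else 0 := by
    intro a
    unfold upU upS
    by_cases ha : a ∈ S
    · rw [Finset.insert_eq_of_mem ha, if_neg (by omega)]
      symm; apply Finset.sum_eq_zero; intro T _; rw [if_neg]; simp [ha]
    · rw [Finset.card_insert_of_notMem ha, hS, if_pos rfl, Finset.sum_filter]
      apply Finset.sum_congr rfl; intro T _
      congr 1
      simp [Finset.insert_subset_iff, ha, and_comm]
  simp_rw [h1]
  rw [Finset.sum_comm]
  unfold upS
  rw [Finset.sum_filter, Finset.mul_sum]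
  apply Finset.sum_congr rfl; intro T _
  by_cases hST : S ⊆ T
  · simp only [hST, true_and, if_true]
    rw [← Finset.sum_filter, Finset.sum_const, nsmul_eq_mul]
    by_cases hT : T.card = n
    · congr 1
      rw [Finset.filter_mem_eq_inter, Finset.univ_inter, Finset.card_sdiff_of_subset hST, Nat.cast_sub (Finset.card_le_card hST), hT, hS]
    · rw [hg T hT]; simp
  · simp [hST]

theorem level_count (G : Finset E → ℝ) (k : ℕ) :
    (∑ S : Finset E, if S.card = k then
      ∑ a, (if (insert a S).card = k + 1 then G (insert a S) else 0) else 0)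
    = ((k:ℝ)+1) * ∑ T : Finset E, if T.card = k + 1 then G T else 0 := by
  have h1 : ∀ S : Finset E, (if S.card = k then
      ∑ a, (if (insert a S).card = k + 1 then G (insert a S) else 0) else 0)
      = ∑ a, if S.card = k ∧ a ∉ S then G (insert a S) else 0 := by
    intro S
    by_cases hS : S.card = k
    · simp only [hS, if_true, true_and]
      apply Finset.sum_congr rfl; intro a _
      by_cases ha : a ∈ S
      · rw [Finset.insert_eq_of_mem ha]; simp [ha, hS]
      · rw [Finset.card_insert_of_notMem ha]; simp [ha, hS]
    · simp [hS]
  simp_rw [h1]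
  rw [Finset.sum_comm]
  have h2 : ∀ a : E, (∑ S : Finset E, if S.card = k ∧ a ∉ S then G (insert a S) else 0)
      = ∑ T : Finset E, if T.card = k+1 ∧ a ∈ T then G T else 0 := by
    intro a
    rw [← Finset.sum_filter, ← Finset.sum_filter]
    refine Finset.sum_bij' (fun S _ => insert a S) (fun T _ => T.erase a) ?_ ?_ ?_ ?_ ?_
    · intro S hS; simp only [mem_filter, mem_univ, true_and] at hS ⊢
      rw [Finset.card_insert_of_notMem hS.2]; simp [hS.1]
    · intro T hT; simp only [mem_filter, mem_univ, true_and] at hT ⊢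
      rw [Finset.card_erase_of_mem hT.2]; simp [hT.1]
    · intro S hS; simp only [mem_filter, mem_univ, true_and] at hS
      exact Finset.erase_insert hS.2
    · intro T hT; simp only [mem_filter, mem_univ, true_and] at hT
      exact Finset.insert_erase hT.2
    · intros; rfl
  simp_rw [h2]
  rw [Finset.sum_comm, Finset.mul_sum]
  apply Finset.sum_congr rfl; intro T _
  by_cases hT : T.card = k + 1
  · simp only [hT, true_and, if_true]
    rw [← Finset.sum_filter, Finset.sum_const, nsmul_eq_mul, Finset.filter_mem_eq_inter, Finset.univ_inter, hT]
    push_cast; ring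
  · simp [hT]

theorem local_abs {ι : Type*} [Fintype ι] (p x : ι → ℝ) (r y : ι → ι → ℝ) (w z m c : ℝ)
    (hm : 2 ≤ m) (hr : ∀ a b, 0 ≤ r a b) (rs : ∀ a b, r a b = r b a)
    (ys : ∀ a b, y a b = y b a)
    (h1 : ∑ a, p a = m * w) (h2 : ∑ a, p a * x a = m * (w * z))
    (h3 : ∀ a, ∑ b, r a b = (m - 1) * p a)
    (h4 : ∀ a, ∑ b, r a b * y a b = (m - 1) * (p a * x a))
    (hl : c * ∑ a, p a * (x a - z) ^ 2 ≤
      (1/2) * ∑ a, ∑ b, r a b / (m - 1) * (x a - x b) ^ 2) :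
    (2 * c - 1) * ((∑ a, p a * x a ^ 2) - m * (w * z ^ 2)) ≤
      (∑ a, ∑ b, r a b * y a b ^ 2) / (m - 1) - ∑ a, p a * x a ^ 2 := by
  set X := ∑ a, p a * x a ^ 2 with hX
  set Y := ∑ a, ∑ b, r a b * y a b ^ 2 with hY
  set Z := ∑ a, ∑ b, r a b * (x a * x b) with hZ
  have e1 : ∑ a, p a * (x a - z) ^ 2 = X - m * (w * z^2) := by
    have : ∀ a, p a * (x a - z) ^ 2 = p a * x a ^ 2 - 2 * z * (p a * x a) + z^2 * p a := by
      intro a; ring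
    simp_rw [this, Finset.sum_add_distrib, Finset.sum_sub_distrib, ← Finset.mul_sum, h1, h2]
    ring
  have sx : ∑ a, ∑ b, r a b * x a ^ 2 = (m - 1) * X := by
    simp_rw [← Finset.sum_mul, h3, hX, Finset.mul_sum]
    exact Finset.sum_congr rfl fun a _ => by ring
  have sx' : ∑ a, ∑ b, r a b * x b ^ 2 = (m - 1) * X := by
    rw [Finset.sum_comm, ← sx]
    exact Finset.sum_congr rfl fun a _ => Finset.sum_congr rfl fun b _ => by rw [rs]
  have sy : ∑ a, ∑ b, r a b * y a b * x a = (m - 1) * X := by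
    simp_rw [← Finset.sum_mul, h4, hX, Finset.mul_sum]
    exact Finset.sum_congr rfl fun a _ => by ring
  have sy' : ∑ a, ∑ b, r a b * y a b * x b = (m - 1) * X := by
    rw [Finset.sum_comm, ← sy]
    exact Finset.sum_congr rfl fun a _ => Finset.sum_congr rfl fun b _ => by rw [rs, ys]
  have s1 : ∑ a, ∑ b, r a b = (m - 1) * (m * w) := by
    simp_rw [h3, ← Finset.mul_sum, h1]
  have t1 : ∑ a, ∑ b, r a b * x a = (m - 1) * (m * (w * z)) := by
    simp_rw [← Finset.sum_mul, h3, ← h2, Finset.mul_sum]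
    exact Finset.sum_congr rfl fun a _ => by ring
  have t1' : ∑ a, ∑ b, r a b * x b = (m - 1) * (m * (w * z)) := by
    rw [Finset.sum_comm, ← t1]
    exact Finset.sum_congr rfl fun a _ => Finset.sum_congr rfl fun b _ => by rw [rs]
  have t2 : ∑ a, ∑ b, r a b * y a b = (m - 1) * (m * (w * z)) := by
    simp_rw [h4, ← Finset.mul_sum, h2]
  have e2 : ∑ a, ∑ b, r a b / (m - 1) * (x a - x b) ^ 2 = 2 * X - 2 * Z / (m - 1) := by
    have : ∀ a b, r a b / (m - 1) * (x a - x b) ^ 2 =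
      (m-1)⁻¹ * (r a b * x a ^ 2) + (m-1)⁻¹ * (r a b * x b ^ 2) - (m-1)⁻¹ * 2 * (r a b * (x a * x b)) := by
      intro a b; ring
    simp_rw [this, Finset.sum_sub_distrib, Finset.sum_add_distrib, ← Finset.mul_sum, sx, sx', ← hZ]
    have : m - 1 ≠ 0 := by linarith
    field_simp; ring
  have e3 : 0 ≤ ∑ a, ∑ b, r a b * (y a b - x a - x b + z) ^ 2 :=
    Finset.sum_nonneg fun a _ => Finset.sum_nonneg fun b _ => mul_nonneg (hr a b) (sq_nonneg _)
  have e4 : ∑ a, ∑ b, r a b * (y a b - x a - x b + z) ^ 2 =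
      Y - 2 * (m - 1) * X - (m - 1) * m * (w * z^2) + 2 * Z := by
    have : ∀ a b, r a b * (y a b - x a - x b + z) ^ 2 =
      r a b * y a b ^ 2 + r a b * x a ^ 2 + r a b * x b ^ 2 + z^2 * r a b
      - 2 * (r a b * y a b * x a) - 2 * (r a b * y a b * x b) + 2 * z * (r a b * y a b)
      + 2 * (r a b * (x a * x b)) - 2 * z * (r a b * x a) - 2 * z * (r a b * x b) := by
      intro a b; ring
    simp_rw [this, Finset.sum_sub_distrib, Finset.sum_add_distrib, Finset.sum_sub_distrib, Finset.sum_add_distrib, ← Finset.mul_sum, sx, sx', sy, sy', s1, t1, t1', t2, ← hZ, ← hY]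
    ring
  rw [e1, e2] at hl
  rw [e4] at e3
  have hm1 : 0 < m - 1 := by linarith
  have e5 : 0 ≤ Y / (m-1) - 2 * X - m * (w * z^2) + 2 * Z / (m-1) := by
    have := div_nonneg e3 hm1.le
    have h : (Y - 2 * (m - 1) * X - (m - 1) * m * (w * z^2) + 2 * Z) / (m-1) = Y / (m-1) - 2 * X - m * (w * z^2) + 2 * Z / (m-1) := by
      field_simp
    rwa [h] at this
  linarith

theorem seq_ineq (A c : ℕ → ℝ) (n l : ℕ) (hl : l < n) (hc : ∀ j, 0 ≤ c j)
    (hA : ∀ k, k + 2 ≤ n → c k * (A (k+1) - A k) ≤ A (k+2) - A (k+1)) :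
    ((∑ i ∈ Finset.Ico l n, ∏ j ∈ range i, c j) / (∑ i ∈ range n, ∏ j ∈ range i, c j)) *
      (A n - A 0) ≤ A n - A l := by
  set Γ : ℕ → ℝ := fun i => ∏ j ∈ range i, c j with hΓ
  have hΓ0 : ∀ i, 0 ≤ Γ i := fun i => Finset.prod_nonneg fun j _ => hc j
  have key : ∀ i d, i + d < n → (A (i+1) - A i) * Γ (i+d) ≤ (A (i+d+1) - A (i+d)) * Γ i := by
    intro i d
    induction d with
    | zero => intro _; simp
    | succ d ih =>
      intro h
      have h1 := ih (by omega)
      have h2 := hA (i+d) (by omega)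
      have h3 : Γ (i+(d+1)) = Γ (i+d) * c (i+d) := by
        simp only [hΓ, ← add_assoc, Finset.prod_range_succ]
      rw [h3]
      have h4 := mul_le_mul_of_nonneg_right h1 (hc (i+d))
      have h5 := mul_le_mul_of_nonneg_right h2 (hΓ0 i)
      have : i + (d+1) + 1 = i + d + 2 := by ring
      rw [this, ← add_assoc]
      linarith
  have tel1 : ∑ i ∈ range l, (A (i+1) - A i) = A l - A 0 := Finset.sum_range_sub A l
  have tel2 : ∑ i ∈ Finset.Ico l n, (A (i+1) - A i) = A n - A l := Finset.sum_Ico_sub A hl.le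
  have main : (A l - A 0) * ∑ i ∈ Finset.Ico l n, Γ i ≤ (A n - A l) * ∑ i ∈ range l, Γ i := by
    rw [← tel1, ← tel2, Finset.sum_mul_sum, Finset.sum_mul_sum, Finset.sum_comm (s := Finset.Ico l n)]
    apply Finset.sum_le_sum; intro i hi
    apply Finset.sum_le_sum; intro j hj
    simp only [Finset.mem_range, Finset.mem_Ico] at hi hj
    obtain ⟨d, rfl⟩ := Nat.exists_eq_add_of_le (show i ≤ j by omega)
    exact key i d hj.2
  have split : ∑ i ∈ range n, Γ i = ∑ i ∈ range l, Γ i + ∑ i ∈ Finset.Ico l n, Γ i :=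
    (Finset.sum_range_add_sum_Ico Γ hl.le).symm
  have pos : 0 < ∑ i ∈ range n, Γ i := by
    have : Γ 0 ≤ ∑ i ∈ range n, Γ i :=
      Finset.single_le_sum (fun i _ => hΓ0 i) (by simp; omega)
    have : Γ 0 = 1 := by simp [hΓ]
    linarith
  rw [div_mul_eq_mul_div, div_le_iff₀ pos, split]
  nlinarith [main]

/-- conditional expectation of `f` given a face `S`. -/
noncomputable def cexp (μ f : Finset E → ℝ) (S : Finset E) : ℝ :=
  upS (fun T => μ T * f T) S / upS μ S

theorem upS_nonneg (μ : Finset E → ℝ) (h : ∀ S, 0 ≤ μ S) (S : Finset E) : 0 ≤ upS μ S :=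
  Finset.sum_nonneg fun T _ => h T

theorem upU_nonneg (μ : Finset E → ℝ) (h : ∀ S, 0 ≤ μ S) (k : ℕ) (S : Finset E) :
    0 ≤ upU μ k S := by
  unfold upU; split_ifs
  · exact upS_nonneg μ h S
  · exact le_rfl

theorem upS_mul_cexp (μ f : Finset E → ℝ) (h : ∀ S, 0 ≤ μ S) (S : Finset E) :
    upS μ S * cexp μ f S = upS (fun T => μ T * f T) S := by
  unfold cexp
  by_cases h0 : upS μ S = 0
  · rw [h0, zero_mul]
    unfold upS at h0 ⊢
    rw [Finset.sum_eq_zero_iff_of_nonneg (fun T _ => h T)] at h0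
    symm; apply Finset.sum_eq_zero; intro T hT; rw [h0 T hT, zero_mul]
  · field_simp

theorem upU_mul_cexp (μ f : Finset E → ℝ) (h : ∀ S, 0 ≤ μ S) (k : ℕ) (S : Finset E) :
    upU μ k S * cexp μ f S = upU (fun T => μ T * f T) k S := by
  unfold upU; split_ifs
  · exact upS_mul_cexp μ f h S
  · simp

theorem piLev_eq (μ : Finset E → ℝ) (n k : ℕ) (S : Finset E) :
    piLev μ n k S = (n.choose k : ℝ)⁻¹ * upU μ k S := by
  unfold piLev upU upS; split_ifs <;> simp

theorem choose_real (n k : ℕ) (h : k ≤ n) :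
    (n.choose (k+1) : ℝ) * ((k:ℝ)+1) = n.choose k * ((n:ℝ) - k) := by
  have := Nat.choose_succ_right_eq n k
  have h2 : ((n.choose (k+1) * (k+1) : ℕ) : ℝ) = ((n.choose k * (n - k) : ℕ) : ℝ) := by rw [this]
  push_cast [Nat.cast_sub h] at h2
  exact h2

theorem upU_step2 (g : Finset E → ℝ) (n k : ℕ) (hg : ∀ T, T.card ≠ n → g T = 0)
    (S : Finset E) (hS : S.card = k) (a : E) :
    ∑ b, upU g (k+2) (insert b (insert a S)) = ((n:ℝ) - k - 1) * upU g (k+1) (insert a S) := by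
  by_cases ha : a ∈ S
  · rw [Finset.insert_eq_of_mem ha]
    have : upU g (k+1) S = 0 := by unfold upU; rw [if_neg (by omega)]
    rw [this, mul_zero]
    apply Finset.sum_eq_zero; intro b _
    unfold upU; rw [if_neg]
    have := Finset.card_insert_le b S
    omega
  · have hc : (insert a S).card = k + 1 := by rw [Finset.card_insert_of_notMem ha, hS]
    have := upS_step g n (k+1) hg (insert a S) hc
    rw [this]; unfold upU; rw [if_pos hc]; push_cast; ring

theorem piLoc_eq (μ : Finset E → ℝ) (n k : ℕ) (hk : k < n) (S : Finset E) (hS : S.card = k)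
    (a : E) : piLoc μ n S a = upU μ (k+1) (insert a S) / (((n:ℝ) - k) * upS μ S) := by
  unfold piLoc
  rw [piLev_eq, piLev_eq, hS]
  have h1 : upU μ k S = upS μ S := by unfold upU; rw [if_pos hS]
  rw [h1]
  have c1 : (n.choose (k+1) : ℝ) ≠ 0 := by exact_mod_cast (Nat.choose_pos hk).ne'
  have c2 : (n.choose k : ℝ) ≠ 0 := by exact_mod_cast (Nat.choose_pos hk.le).ne'
  have e := choose_real n k hk.le
  by_cases h0 : upS μ S = 0
  · simp [h0]
  have hk1 : (k:ℝ) + 1 ≠ 0 := by positivity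
  have hk2 : (n:ℝ) - k ≠ 0 := by
    have : (k:ℝ) < n := by exact_mod_cast hk
    linarith
  rw [div_eq_div_iff (by positivity) (by positivity)]
  field_simp
  linear_combination (-upU μ (k+1) (insert a S)) * e

theorem upU_mono0 (μ : Finset E → ℝ) (n k : ℕ) (h : ∀ S, 0 ≤ μ S)
    (hg : ∀ T, T.card ≠ n → μ T = 0)
    (S : Finset E) (hS : S.card = k) (a b : E) (h0 : upU μ (k+1) (insert a S) = 0) :
    upU μ (k+2) (insert b (insert a S)) = 0 := by
  have := upU_step2 μ n k hg S hS a
  rw [h0, mul_zero, Finset.sum_eq_zero_iff_of_nonneg (fun b _ => upU_nonneg μ h _ _)] at this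
  exact this b (Finset.mem_univ b)

theorem piLocQ_eq (μ : Finset E → ℝ) (n k : ℕ) (hk : k + 2 ≤ n) (h : ∀ S, 0 ≤ μ S)
    (hg : ∀ T, T.card ≠ n → μ T = 0)
    (S : Finset E) (hS : S.card = k) (a b : E) :
    piLoc μ n S a * localQ μ n S a b =
    upU μ (k+2) (insert b (insert a S)) / ((n:ℝ) - k - 1) / (((n:ℝ) - k) * upS μ S) := by
  rw [piLoc_eq μ n k (by omega) S hS]
  by_cases h0 : upU μ (k+1) (insert a S) = 0
  · rw [upU_mono0 μ n k h hg S hS a b h0, h0]; simp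
  unfold localQ
  simp only [Matrix.of_apply]
  rw [piLev_eq, piLev_eq, hS]
  by_cases hw : upS μ S = 0
  · simp [hw]
  have c1 : (n.choose (k+1) : ℝ) ≠ 0 := by exact_mod_cast (Nat.choose_pos (by omega)).ne'
  have c2 : (n.choose (k+2) : ℝ) ≠ 0 := by exact_mod_cast (Nat.choose_pos hk).ne'
  have e := choose_real n (k+1) (by omega)
  push_cast at e
  have hkr : (k:ℝ) + 2 ≤ n := by exact_mod_cast hk
  have hk1 : (k:ℝ) + 2 ≠ 0 := by positivity
  have hk2 : (n:ℝ) - k ≠ 0 := by linarith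
  have hk3 : (n:ℝ) - k - 1 ≠ 0 := by linarith
  have e' : (n.choose (k+2) : ℝ) * (k+2) = n.choose (k+1) * ((n:ℝ) - k - 1) := by
    linear_combination e
  rw [div_mul_div_comm, div_div, div_eq_div_iff (by positivity) (by positivity)]
  field_simp
  linear_combination (-upU μ (k+2) (insert b (insert a S))) * e'

theorem local_S (μ f : Finset E → ℝ) (n k : ℕ) (hk : k + 2 ≤ n) (h : ∀ S, 0 ≤ μ S)
    (hg : ∀ T, T.card ≠ n → μ T = 0) (c : ℝ)
    (S : Finset E) (hS : S.card = k)
    (hloc : 0 < piLev μ n k S → ∀ f : E → ℝ, c * varw (piLoc μ n S) f ≤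
        dirichletForm (piLoc μ n S) (localQ μ n S) f) :
    (2 * c - 1) * ((∑ a, upU μ (k+1) (insert a S) * cexp μ f (insert a S) ^ 2)
      - ((n:ℝ) - k) * (upS μ S * cexp μ f S ^ 2)) ≤
      (∑ a, ∑ b, upU μ (k+2) (insert b (insert a S)) * cexp μ f (insert b (insert a S)) ^ 2)
        / ((n:ℝ) - k - 1) - ∑ a, upU μ (k+1) (insert a S) * cexp μ f (insert a S) ^ 2 := by
  have hkr : (k:ℝ) + 2 ≤ n := by exact_mod_cast hk
  have hgf : ∀ T, T.card ≠ n → μ T * f T = 0 := fun T hT => by rw [hg T hT, zero_mul]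
  have h1 := upS_step μ n k hg S hS
  have h2 : ∑ a, upU μ (k+1) (insert a S) * cexp μ f (insert a S)
      = ((n:ℝ) - k) * (upS μ S * cexp μ f S) := by
    simp_rw [upU_mul_cexp μ f h]
    rw [upS_step _ n k hgf S hS, upS_mul_cexp μ f h]
  refine local_abs (fun a => upU μ (k+1) (insert a S)) (fun a => cexp μ f (insert a S))
    (fun a b => upU μ (k+2) (insert b (insert a S)))
    (fun a b => cexp μ f (insert b (insert a S))) (upS μ S) (cexp μ f S) ((n:ℝ) - k) c
    (by linarith) (fun a b => upU_nonneg μ h _ _)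
    (fun a b => by simp only [Finset.insert_comm a b]) (fun a b => by simp only [Finset.insert_comm a b])
    h1 h2 (fun a => upU_step2 μ n k hg S hS a) ?_ ?_
  · intro a
    simp_rw [upU_mul_cexp μ f h]
    exact upU_step2 _ n k hgf S hS a
  · rcases (upS_nonneg μ h S).eq_or_lt with hw | hw
    · have hp : ∀ a, upU μ (k+1) (insert a S) = 0 := by
        rw [← hw, mul_zero, Finset.sum_eq_zero_iff_of_nonneg (fun b _ => upU_nonneg μ h _ _)] at h1
        exact fun a => h1 a (Finset.mem_univ a)
      simp [hp, upU_mono0 μ n k h hg S hS]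
    · have hpos : 0 < piLev μ n k S := by
        rw [piLev_eq]; unfold upU; rw [if_pos hS]
        have : (0:ℝ) < n.choose k := by exact_mod_cast Nat.choose_pos (by omega)
        positivity
      have hm : 0 < ((n:ℝ) - k) * upS μ S := mul_pos (by linarith) hw
      have H := hloc hpos (fun a => cexp μ f (insert a S))
      unfold varw dirichletForm at H
      simp_rw [piLocQ_eq μ n k hk h hg S hS, piLoc_eq μ n k (by omega) S hS] at H
      have hz : ∑ b, upU μ (k+1) (insert b S) / (((n:ℝ) - k) * upS μ S) * cexp μ f (insert b S)
          = cexp μ f S := by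
        simp_rw [div_mul_eq_mul_div, ← Finset.sum_div]
        rw [h2]
        have hne : (n:ℝ) - k ≠ 0 := by linarith
        field_simp
      rw [hz] at H
      simp_rw [div_mul_eq_mul_div _ (((n:ℝ) - k) * upS μ S), ← Finset.sum_div] at H
      rw [← mul_div_assoc, ← mul_div_assoc, div_le_div_iff_of_pos_right hm] at H
      exact H

/-- second moment of the level-`k` projection. -/
noncomputable def Alev (μ f : Finset E → ℝ) (n k : ℕ) : ℝ :=
  (n.choose k : ℝ)⁻¹ * ∑ S : Finset E, if S.card = k then upS μ S * cexp μ f S ^ 2 else 0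

theorem upU_count (μ f : Finset E → ℝ) (k : ℕ) :
    (∑ S : Finset E, if S.card = k then
      ∑ a, upU μ (k+1) (insert a S) * cexp μ f (insert a S) ^ 2 else 0)
    = ((k:ℝ)+1) * ∑ S : Finset E, if S.card = k+1 then upS μ S * cexp μ f S ^ 2 else 0 := by
  rw [← level_count (fun S => upS μ S * cexp μ f S ^ 2) k]
  unfold upU
  simp only [ite_mul, zero_mul]

theorem upU_count2 (μ f : Finset E → ℝ) (k : ℕ) :
    (∑ S : Finset E, if S.card = k then
      ∑ a, ∑ b, upU μ (k+2) (insert b (insert a S)) * cexp μ f (insert b (insert a S)) ^ 2 else 0)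
    = ((k:ℝ)+1) * (((k:ℝ)+2) *
      ∑ S : Finset E, if S.card = k+2 then upS μ S * cexp μ f S ^ 2 else 0) := by
  have e := upU_count μ f (k+1)
  push_cast at e
  rw [show ((k:ℝ)+2) = (k:ℝ)+1+1 by ring, ← e, ← level_count _ k]
  apply Finset.sum_congr rfl; intro S _
  split_ifs with hS
  · apply Finset.sum_congr rfl; intro a _
    split_ifs with ha
    · rfl
    · apply Finset.sum_eq_zero; intro b _
      unfold upU; rw [if_neg, zero_mul]
      have h1 := Finset.card_insert_le b (insert a S)
      have h2 := Finset.card_insert_le a S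
      omega
  · rfl

theorem Alev_step (μ f : Finset E → ℝ) (n k : ℕ) (hk : k + 2 ≤ n) (h : ∀ S, 0 ≤ μ S)
    (hg : ∀ T, T.card ≠ n → μ T = 0) (c : ℝ)
    (hloc : ∀ S : Finset E, S.card = k → 0 < piLev μ n k S → ∀ f : E → ℝ,
      c * varw (piLoc μ n S) f ≤ dirichletForm (piLoc μ n S) (localQ μ n S) f) :
    (2 * c - 1) * (Alev μ f n (k+1) - Alev μ f n k) ≤ Alev μ f n (k+2) - Alev μ f n (k+1) := by
  have H : ∑ S : Finset E, (if S.card = k then (2 * c - 1) * ((∑ a, upU μ (k+1) (insert a S) * cexp μ f (insert a S) ^ 2)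
      - ((n:ℝ) - k) * (upS μ S * cexp μ f S ^ 2)) else 0) ≤
      ∑ S : Finset E, if S.card = k then (∑ a, ∑ b, upU μ (k+2) (insert b (insert a S)) * cexp μ f (insert b (insert a S)) ^ 2)
        / ((n:ℝ) - k - 1) - ∑ a, upU μ (k+1) (insert a S) * cexp μ f (insert a S) ^ 2 else 0 := by
    apply Finset.sum_le_sum; intro S _
    split_ifs with hS
    · exact local_S μ f n k hk h hg c S hS (hloc S hS)
    · exact le_rfl
  have i1 : ∀ (p : Prop) [Decidable p] (x y : ℝ), (if p then x - y else 0) = (if p then x else 0) - (if p then y else 0) := by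
    intros; split_ifs <;> simp
  have i2 : ∀ (p : Prop) [Decidable p] (x y : ℝ), (if p then x * y else 0) = x * (if p then y else 0) := by
    intros; split_ifs <;> simp
  have i3 : ∀ (p : Prop) [Decidable p] (x y : ℝ), (if p then x / y else 0) = (if p then x else 0) / y := by
    intros; split_ifs <;> simp
  simp_rw [i2 _ (2*c-1), i1, i2 _ ((n:ℝ) - k), i3, ← Finset.mul_sum, Finset.sum_sub_distrib, ← Finset.sum_div, ← Finset.mul_sum, upU_count2, upU_count] at H
  unfold Alev
  set B0 := ∑ S : Finset E, if S.card = k then upS μ S * cexp μ f S ^ 2 else 0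
  set B1 := ∑ S : Finset E, if S.card = k+1 then upS μ S * cexp μ f S ^ 2 else 0
  set B2 := ∑ S : Finset E, if S.card = k+2 then upS μ S * cexp μ f S ^ 2 else 0
  have c0 : (0:ℝ) < n.choose k := by exact_mod_cast (Nat.choose_pos (by omega))
  have c1 : (0:ℝ) < n.choose (k+1) := by exact_mod_cast (Nat.choose_pos (by omega))
  have c2 : (0:ℝ) < n.choose (k+2) := by exact_mod_cast (Nat.choose_pos hk)
  have e1 := choose_real n k (by omega)
  have e2 := choose_real n (k+1) (by omega)
  push_cast at e2
  have hkr : (k:ℝ) + 2 ≤ n := by exact_mod_cast hk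
  have hk2 : 0 < (n:ℝ) - k := by linarith
  have hk3 : 0 < (n:ℝ) - k - 1 := by linarith
  have g1 : (n.choose (k+1) : ℝ)⁻¹ = ((k:ℝ)+1) / (n.choose k * ((n:ℝ) - k)) := by
    rw [← e1]; field_simp
  have g2 : (n.choose (k+2) : ℝ)⁻¹ = ((k:ℝ)+1) * ((k:ℝ)+2) / (n.choose k * ((n:ℝ) - k) * ((n:ℝ) - k - 1)) := by
    rw [← e1, eq_div_iff (by positivity), inv_mul_eq_div, div_eq_iff c2.ne']
    linear_combination (-(k+1:ℝ)) * e2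
  rw [g1, g2]
  have hd : 0 < (n.choose k * ((n:ℝ) - k)) := by positivity
  have H2 := div_le_div_of_nonneg_right H hd.le
  have hn2 := hk2.ne'
  have hn3 := hk3.ne'
  have hn0 := c0.ne'
  have L : (2 * c - 1) * (((k:ℝ)+1) / (n.choose k * ((n:ℝ) - k)) * B1 - (n.choose k : ℝ)⁻¹ * B0)
      = (2 * c - 1) * (((k:ℝ)+1) * B1 - ((n:ℝ) - k) * B0) / (n.choose k * ((n:ℝ) - k)) := by
    field_simp
  have R : ((k:ℝ)+1) * ((k:ℝ)+2) / (n.choose k * ((n:ℝ) - k) * ((n:ℝ) - k - 1)) * B2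
      - ((k:ℝ)+1) / (n.choose k * ((n:ℝ) - k)) * B1 =
      (((k:ℝ)+1) * (((k:ℝ)+2) * B2) / ((n:ℝ) - k - 1) - ((k:ℝ)+1) * B1)
        / (n.choose k * ((n:ℝ) - k)) := by
    field_simp
  rw [L, R]
  exact H2

theorem Alev_zero (μ f : Finset E → ℝ) (n : ℕ) (h1 : ∑ S, μ S = 1) :
    Alev μ f n 0 = (∑ S, μ S * f S) ^ 2 := by
  unfold Alev cexp upS
  simp [Finset.card_eq_zero, h1]

theorem upS_top (g : Finset E → ℝ) (n : ℕ) (hg : ∀ T, T.card ≠ n → g T = 0)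
    (S : Finset E) (hS : S.card = n) : upS g S = g S := by
  unfold upS
  apply Finset.sum_eq_single S
  · intro T hT hne
    apply hg; intro hc
    simp only [mem_filter, mem_univ, true_and] at hT
    exact hne (Finset.eq_of_subset_of_card_le hT (by omega)).symm
  · intro hS; simp at hS

theorem Alev_top (μ f : Finset E → ℝ) (n : ℕ) (hg : ∀ T, T.card ≠ n → μ T = 0) :
    Alev μ f n n = ∑ S, μ S * f S ^ 2 := by
  unfold Alev
  simp only [Nat.choose_self, Nat.cast_one, inv_one, one_mul]
  apply Finset.sum_congr rfl; intro S _
  split_ifs with hS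
  · unfold cexp
    rw [upS_top μ n hg S hS, upS_top _ n (fun T hT => by rw [hg T hT, zero_mul]) S hS]
    by_cases h0 : μ S = 0
    · simp [h0]
    · field_simp
  · rw [hg S hS, zero_mul]

theorem piLev_top (μ : Finset E → ℝ) (n : ℕ) (hg : ∀ T, T.card ≠ n → μ T = 0) :
    piLev μ n n = μ := by
  funext S
  rw [piLev_eq]; unfold upU
  split_ifs with hS
  · rw [upS_top μ n hg S hS]; simp
  · rw [hg S hS]; simp

theorem varw_eq_s14 (μ f : Finset E → ℝ) (h1 : ∑ S, μ S = 1) :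
    varw μ f = ∑ S, μ S * f S ^ 2 - (∑ S, μ S * f S) ^ 2 := by
  unfold varw
  set z := ∑ S, μ S * f S
  have : ∀ a, μ a * (f a - z) ^ 2 = μ a * f a ^ 2 - 2 * z * (μ a * f a) + z^2 * μ a := by
    intro a; ring
  simp_rw [this, Finset.sum_add_distrib, Finset.sum_sub_distrib, ← Finset.mul_sum, h1]
  change _ - 2 * z * z + _ = _
  ring

theorem dirichlet_eq (μ f : Finset E → ℝ) (n l : ℕ) (hl : l < n) (h : ∀ S, 0 ≤ μ S)
    (hg : ∀ T, T.card ≠ n → μ T = 0) :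
    dirichletForm μ (PdownM n l * PupM μ n l n) f = Alev μ f n n - Alev μ f n l := by
  have c0 : (0:ℝ) < n.choose l := by exact_mod_cast (Nat.choose_pos hl.le)
  have e1 : ∀ S T : Finset E, μ S * (PdownM n l * PupM μ n l n : Matrix (Finset E) (Finset E) ℝ) S T * (f S - f T) ^ 2 =
      ∑ R : Finset E, (n.choose l : ℝ)⁻¹ * if R.card = l then
        (upS μ R)⁻¹ * ((if R ⊆ S then μ S else 0) * (if R ⊆ T then μ T else 0) * (f S - f T) ^ 2) else 0 := by
    intro S T
    rw [Matrix.mul_apply, Finset.mul_sum, Finset.sum_mul]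
    apply Finset.sum_congr rfl; intro R _
    unfold PdownM PupM
    simp only [Matrix.of_apply]
    by_cases hS : S.card = n
    swap
    · simp [hg S hS]
    by_cases hT : T.card = n
    swap
    · simp [hT, hg T hT]
    by_cases hR : R.card = l
    swap
    · simp [hR]
    by_cases hRS : R ⊆ S
    swap
    · simp [hRS]
    by_cases hRT : R ⊆ T
    swap
    · simp [hRT]
    simp only [hS, hT, hR, hRS, hRT, and_self, if_true]
    rw [piLev_top μ n hg, piLev_eq]
    unfold upU
    rw [if_pos hR]
    field_simp
  unfold dirichletForm
  simp_rw [e1]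
  have e2 : ∑ S : Finset E, ∑ T : Finset E, ∑ R : Finset E, (n.choose l : ℝ)⁻¹ * (if R.card = l then
        (upS μ R)⁻¹ * ((if R ⊆ S then μ S else 0) * (if R ⊆ T then μ T else 0) * (f S - f T) ^ 2) else 0)
     = ∑ R : Finset E, (n.choose l : ℝ)⁻¹ * (if R.card = l then 2 * (upS (fun T => μ T * f T ^ 2) R -
        upS μ R * cexp μ f R ^ 2) else 0) := by
    have : ∀ S : Finset E, ∀ F : Finset E → Finset E → ℝ, ∑ T : Finset E, ∑ R : Finset E, F T R = ∑ R : Finset E, ∑ T : Finset E, F T R := fun S F => Finset.sum_comm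
    simp_rw [fun S => this S (fun T R => (n.choose l : ℝ)⁻¹ * (if R.card = l then
        (upS μ R)⁻¹ * ((if R ⊆ S then μ S else 0) * (if R ⊆ T then μ T else 0) * (f S - f T) ^ 2) else 0))]
    rw [Finset.sum_comm]
    apply Finset.sum_congr rfl; intro R _
    simp_rw [← Finset.mul_sum]
    congr 1
    split_ifs with hR
    swap
    · simp
    simp_rw [← Finset.mul_sum]
    have q : ∀ g : Finset E → ℝ, upS g R = ∑ T, if R ⊆ T then g T else 0 := by
      intro g; unfold upS; rw [Finset.sum_filter]
    have s0 := q μ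
    have s1 : upS (fun T => μ T * f T) R = ∑ T, (if R ⊆ T then μ T else 0) * f T := by
      rw [q]; simp only [ite_mul, zero_mul]
    have s2 : upS (fun T => μ T * f T ^ 2) R = ∑ T, (if R ⊆ T then μ T else 0) * f T ^ 2 := by
      rw [q]; simp only [ite_mul, zero_mul]
    have ex : ∑ S : Finset E, ∑ T : Finset E, ((if R ⊆ S then μ S else 0) * (if R ⊆ T then μ T else 0) * (f S - f T) ^ 2)
        = 2 * (upS μ R * upS (fun T => μ T * f T ^ 2) R - upS (fun T => μ T * f T) R ^ 2) := by
      rw [s0, s1, s2]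
      set v : Finset E → ℝ := fun T => if R ⊆ T then μ T else 0 with hv
      change ∑ S, ∑ T, v S * v T * (f S - f T) ^ 2 = 2 * ((∑ T, v T) * (∑ T, v T * f T ^ 2) - (∑ T, v T * f T) ^ 2)
      have : ∀ S T, v S * v T * (f S - f T) ^ 2 = (v S * f S ^ 2) * v T + v S * (v T * f T ^ 2) - 2 * ((v S * f S) * (v T * f T)) := by
        intro S T; ring
      simp_rw [this, Finset.sum_sub_distrib, Finset.sum_add_distrib, ← Finset.mul_sum, ← Finset.sum_mul]
      ring
    rw [ex]
    by_cases h0 : upS μ R = 0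
    · rw [h0]
      have : upS (fun T => μ T * f T ^ 2) R = 0 := by
        have := upS_mul_cexp μ (fun T => f T ^ 2) h R
        rw [h0, zero_mul] at this
        exact this.symm
      rw [this]; simp
    · unfold cexp; field_simp
  rw [e2, Alev_top μ f n hg]
  unfold Alev
  have i1 : ∀ (p : Prop) [Decidable p] (x y : ℝ), (if p then 2 * (x - y) else 0) = 2 * ((if p then x else 0) - (if p then y else 0)) := by
    intros; split_ifs <;> simp
  simp_rw [i1, ← Finset.mul_sum, Finset.sum_sub_distrib]
  have cnt : (∑ R : Finset E, if R.card = l then upS (fun T => μ T * f T ^ 2) R else 0)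
      = n.choose l * ∑ S, μ S * f S ^ 2 := by
    unfold upS
    simp_rw [Finset.sum_filter]
    have : ∀ R : Finset E, (if R.card = l then ∑ T, (if R ⊆ T then μ T * f T ^ 2 else 0) else 0) =
        ∑ T, if R ⊆ T ∧ R.card = l then μ T * f T ^ 2 else 0 := by
      intro R
      by_cases hR : R.card = l <;> simp [hR]
    simp_rw [this]
    rw [Finset.sum_comm, Finset.mul_sum]
    apply Finset.sum_congr rfl; intro T _
    by_cases hT : T.card = n
    · rw [← Finset.sum_filter, Finset.sum_const, nsmul_eq_mul]
      congr 2
      rw [← hT, ← Finset.card_powersetCard]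
      congr 1; ext R; simp [Finset.mem_powersetCard]
    · simp [hg T hT]
  rw [cnt]
  field_simp

/-- Improved Random Walk Theorem: for `0 ≤ ℓ < n`, the spectral gap
of the multi-level down-up walk from level `n` to `ℓ` satisfies
`γ(P_{n,ℓ}^∇) ≥ (Σ_{i=ℓ}^{n-1} Γ_i)/(Σ_{i=0}^{n-1} Γ_i)` with
`Γ_i = ∏_{j=0}^{i-1}(2γ_j − 1)` (so `Γ_0 = 1`), stated as a Poincaré inequality. -/
theorem improved_random_walk_theorem (μ : Finset E → ℝ) (n l : ℕ) (hl : l < n)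
    (hμ : IsDistOn μ n) (γ : ℕ → ℝ)
    (hγ : ∀ j, 0 ≤ 2 * γ j - 1)
    (hloc : ∀ j, j ≤ n - 2 → ∀ S : Finset E, S.card = j → 0 < piLev μ n j S →
      ∀ f : E → ℝ, γ j * varw (piLoc μ n S) f ≤
        dirichletForm (piLoc μ n S) (localQ μ n S) f)
    (f : Finset E → ℝ) :
    ((∑ i ∈ Finset.Ico l n, ∏ j ∈ range i, (2 * γ j - 1)) /
        (∑ i ∈ range n, ∏ j ∈ range i, (2 * γ j - 1))) * varw (piLev μ n n) f ≤
      dirichletForm (piLev μ n n) (PdownM n l * PupM μ n l n) f := by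
  obtain ⟨h, hg, h1⟩ := hμ
  rw [piLev_top μ n hg, dirichlet_eq μ f n l hl h hg, varw_eq_s14 μ f h1, ← Alev_top μ f n hg,
    ← Alev_zero μ f n h1]
  exact seq_ineq (Alev μ f n) (fun j => 2 * γ j - 1) n l hl hγ
    (fun k hk => Alev_step μ f n k hk h hg (γ k) (fun S hS => hloc k (by omega) S hS))
end

section
/- For any matroid M of rank r, the bases-exchange walk (the down-up walk on bases) has spectral gap at least 1/r, and hence its mixing time is O(r²·log n) where n is the size of the ground set. -/
open Finset
open scoped Classical

lemma spec_decomp {V : Type*} [Fintype V] [DecidableEq V] (S : Matrix V V ℝ)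
    (hS : ∀ x y, S x y = S y x) (h : V → ℝ)
    (hev : ∀ (l : ℝ) (b : V → ℝ), (∀ x, ∑ y, S x y * b y = l * b x) → b ≠ 0 → 0 < l →
      ∑ x, b x * h x = 0) :
    ∑ x, ∑ y, S x y * h x * h y ≤ 0 := by
  have hH : S.IsHermitian := by
    ext x y; simp [Matrix.conjTranspose_apply, hS x y]
  set b := hH.eigenvectorBasis with hb
  have e1 : ∑ x, ∑ y, S x y * h x * h y = ∑ x, h x * (∑ y, S x y * h y) := by
    refine Finset.sum_congr rfl fun x _ => ?_
    rw [Finset.mul_sum]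
    refine Finset.sum_congr rfl fun y _ => ?_
    ring
  have e2 := b.sum_inner_mul_inner (WithLp.toLp 2 h) (WithLp.toLp 2 (fun x => ∑ y, S x y * h y))
  have e3 : ∀ i x, ∑ y, S x y * b i y = hH.eigenvalues i * b i x := by
    intro i x
    have := congrFun (hH.mulVec_eigenvectorBasis i) x
    simpa [Matrix.mulVec, dotProduct] using this
  have e4 : ∀ i, inner ℝ (b i) (WithLp.toLp 2 (fun x => ∑ y, S x y * h y)) =
      hH.eigenvalues i * ∑ x, b i x * h x := by
    intro i
    simp only [PiLp.inner_apply, RCLike.inner_apply, conj_trivial]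
    simp only [Finset.sum_mul, Finset.mul_sum]
    rw [Finset.sum_comm]
    refine Finset.sum_congr rfl fun y _ => ?_
    rw [← mul_assoc, ← e3 i y, Finset.sum_mul]
    refine Finset.sum_congr rfl fun x _ => ?_
    rw [hS x y]; ring
  have e5 : ∀ i, inner ℝ (WithLp.toLp 2 h) (b i) = ∑ x, b i x * h x := by
    intro i
    simp [PiLp.inner_apply]
  have e6 : inner ℝ (WithLp.toLp 2 h) (WithLp.toLp 2 (fun x => ∑ y, S x y * h y)) =
      ∑ x, h x * (∑ y, S x y * h y) := by
    simp [PiLp.inner_apply, mul_comm]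
  rw [e1, ← e6, ← e2]
  refine Finset.sum_nonpos fun i _ => ?_
  rw [e4, e5]
  rcases le_or_gt (hH.eigenvalues i) 0 with hl | hl
  · nlinarith [mul_self_nonneg (∑ x, b i x * h x)]
  · have := hev _ (fun x => b i x) (e3 i) (by
      intro h0
      have := b.orthonormal.ne_zero i
      apply this
      ext x
      exact congrFun h0 x) hl
    rw [this]; simp

lemma spectral_step {V : Type*} [Fintype V] [DecidableEq V] (A : V → V → ℝ) (d : V → ℝ)
    (hsym : ∀ x y, A x y = A y x) (hnn : ∀ x y, 0 ≤ A x y) (hrow : ∀ x, ∑ y, A x y = d x)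
    (hconn : ∀ g : V → ℝ, (∀ x y, A x y ≠ 0 → g x = g y) →
      ∀ x y, d x ≠ 0 → d y ≠ 0 → g x = g y)
    (htr : ∀ g : V → ℝ, ∑ x, ∑ y, A x y * g x * g y ≤ ∑ x, (∑ y, A x y * g y) ^ 2 / d x)
    (g : V → ℝ) (hg : ∑ x, d x * g x = 0) :
    ∑ x, ∑ y, A x y * g x * g y ≤ 0 := by
  have hd : ∀ x, 0 ≤ d x := fun x => by rw [← hrow]; exact Finset.sum_nonneg fun y _ => hnn x y
  have hA0 : ∀ x y, d x = 0 → A x y = 0 := by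
    intro x y h
    rw [← hrow, Finset.sum_eq_zero_iff_of_nonneg (fun y _ => hnn x y)] at h
    exact h y (mem_univ y)
  set s : V → ℝ := fun x => Real.sqrt (d x) with hs
  have hss : ∀ x, s x * s x = d x := fun x => Real.mul_self_sqrt (hd x)
  have hs0 : ∀ x, s x = 0 ↔ d x = 0 := fun x => Real.sqrt_eq_zero (hd x)
  have hAs : ∀ x y, A x y * ((s x)⁻¹ * s x) = A x y := by
    intro x y
    by_cases h : d x = 0
    · simp [hA0 x y h]
    · rw [inv_mul_cancel₀ (by rwa [Ne, hs0]), mul_one]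
  have hAs' : ∀ x y, A x y * ((s y)⁻¹ * s y) = A x y := by
    intro x y; rw [hsym]; exact hAs y x
  have key := spec_decomp (fun x y => A x y * (s x)⁻¹ * (s y)⁻¹)
    (fun x y => by rw [hsym x y]; ring) (fun x => s x * g x) ?_
  · refine le_of_eq_of_le ?_ key
    refine Finset.sum_congr rfl fun x _ => Finset.sum_congr rfl fun y _ => ?_
    calc A x y * g x * g y = (A x y * ((s x)⁻¹ * s x)) * ((s y)⁻¹ * s y) * g x * g y := by
          rw [hAs x y, hAs' x y]
      _ = _ := by ring
  intro l b hb hb0 hl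
  set φ : V → ℝ := fun x => (s x)⁻¹ * b x with hφ
  have hbz : ∀ x, d x = 0 → b x = 0 := by
    intro x hx
    have h1 := hb x
    simp only [hA0 x _ hx, zero_mul, Finset.sum_const_zero] at h1
    rcases mul_eq_zero.1 h1.symm with h | h
    · exact absurd h hl.ne'
    · exact h
  have hbφ : ∀ x, b x = s x * φ x := by
    intro x
    by_cases h : d x = 0
    · rw [hbz x h, (hs0 x).2 h, zero_mul]
    · simp only [hφ]; rw [← mul_assoc, mul_inv_cancel₀ (by rwa [Ne, hs0]), one_mul]
  have hAφ : ∀ x, ∑ y, A x y * φ y = l * (d x * φ x) := by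
    intro x
    have h1 : s x * ∑ y, A x y * (s x)⁻¹ * (s y)⁻¹ * b y = ∑ y, A x y * φ y := by
      rw [Finset.mul_sum]
      refine Finset.sum_congr rfl fun y _ => ?_
      conv_rhs => rw [← hAs x y]
      simp only [hφ]; ring
    rw [← h1, hb x, hbφ x, ← hss x]; ring
  set X := ∑ x, d x * φ x ^ 2 with hX
  have hQ : ∑ x, ∑ y, A x y * φ x * φ y = l * X := by
    rw [hX, Finset.mul_sum]
    refine Finset.sum_congr rfl fun x _ => ?_
    have : ∑ y, A x y * φ x * φ y = φ x * ∑ y, A x y * φ y := by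
      rw [Finset.mul_sum]; refine Finset.sum_congr rfl fun y _ => ?_; ring
    rw [this, hAφ]; ring
  have hXpos : 0 < X := by
    have hXb : X = ∑ x, b x ^ 2 := by
      rw [hX]; refine Finset.sum_congr rfl fun x _ => ?_
      rw [hbφ x, ← hss x]; ring
    rw [hXb]
    obtain ⟨x, hx⟩ := Function.ne_iff.1 hb0
    exact Finset.sum_pos' (fun x _ => sq_nonneg _) ⟨x, mem_univ x, by
      have : b x ≠ 0 := hx
      positivity⟩
  have h2 := htr φ
  have h3 : ∑ x, (∑ y, A x y * φ y) ^ 2 / d x = l ^ 2 * X := by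
    rw [hX, Finset.mul_sum]
    refine Finset.sum_congr rfl fun x _ => ?_
    rw [hAφ]
    by_cases h : d x = 0
    · simp [h]
    · field_simp
  rw [hQ, h3] at h2
  have hl1 : 1 ≤ l := by
    by_contra hlt
    push Not at hlt
    have : l * X * (1 - l) > 0 := by
      have : 0 < 1 - l := by linarith
      positivity
    nlinarith
  have h4 : ∑ x, ∑ y, A x y * (φ x - φ y) ^ 2 = 2 * X - 2 * (l * X) := by
    have e1 : ∑ x, ∑ y, A x y * φ x ^ 2 = X := by
      rw [hX]; refine Finset.sum_congr rfl fun x _ => ?_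
      rw [← Finset.sum_mul, hrow]
    have e2 : ∑ x, ∑ y, A x y * φ y ^ 2 = X := by
      rw [Finset.sum_comm, ← e1]
      refine Finset.sum_congr rfl fun x _ => Finset.sum_congr rfl fun y _ => ?_
      rw [hsym]
    rw [← hQ]
    nth_rewrite 1 [two_mul]
    nth_rewrite 1 [← e1]
    rw [← e2]
    simp only [Finset.mul_sum, ← Finset.sum_add_distrib, ← Finset.sum_sub_distrib]
    refine Finset.sum_congr rfl fun x _ => Finset.sum_congr rfl fun y _ => ?_
    ring
  have h5 : ∑ x, ∑ y, A x y * (φ x - φ y) ^ 2 = 0 := by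
    refine le_antisymm ?_ (Finset.sum_nonneg fun x _ => Finset.sum_nonneg fun y _ =>
      mul_nonneg (hnn x y) (sq_nonneg _))
    rw [h4]; nlinarith
  have h6 : ∀ x y, A x y ≠ 0 → φ x = φ y := by
    intro x y hxy
    rw [Finset.sum_eq_zero_iff_of_nonneg (fun x _ => Finset.sum_nonneg fun y _ =>
      mul_nonneg (hnn x y) (sq_nonneg _))] at h5
    have := h5 x (mem_univ x)
    rw [Finset.sum_eq_zero_iff_of_nonneg (fun y _ =>
      mul_nonneg (hnn x y) (sq_nonneg _))] at this
    have := this y (mem_univ y)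
    rcases mul_eq_zero.1 this with h | h
    · exact absurd h hxy
    · exact sub_eq_zero.1 (pow_eq_zero_iff (two_ne_zero) |>.1 h)
  have h7 := hconn φ h6
  by_cases hex : ∃ x0, d x0 ≠ 0
  · obtain ⟨x0, hx0⟩ := hex
    have : ∑ x, b x * (s x * g x) = φ x0 * ∑ x, d x * g x := by
      rw [Finset.mul_sum]
      refine Finset.sum_congr rfl fun x _ => ?_
      by_cases h : d x = 0
      · rw [hbz x h, h]; ring
      · rw [hbφ x, h7 x x0 h hx0, ← hss x]; ring
    rw [this, hg, mul_zero]
  · push Not at hex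
    exact Finset.sum_eq_zero fun x _ => by rw [hbz x (hex x), zero_mul]

/-- rank two step -/
lemma rank_two_step {V : Type*} [Fintype V] [DecidableEq V] (I : V → Prop) (p : V → V → Prop)
    (hpr : ∀ x, I x → p x x) (hpI : ∀ x y, p x y → I x) (hps : ∀ x y, p x y → p y x)
    (hpt : ∀ x y z, p x y → p y z → p x z)
    (A : V → V → ℝ) (hA : ∀ x y, A x y = (if I x ∧ I y then 1 else 0) - if p x y then 1 else 0)
    (g : V → ℝ) (hg : ∑ x, (∑ y, A x y) * g x = 0) :
    ∑ x, ∑ y, A x y * g x * g y ≤ 0 := by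
  set q : V → V → ℝ := fun x y => if p x y then 1 else 0 with hq
  set i : V → ℝ := fun x => if I x then 1 else 0 with hi
  have hA' : ∀ x y, A x y = i x * i y - q x y := by
    intro x y; rw [hA]; simp only [hi, hq]; by_cases h1 : I x <;> by_cases h2 : I y <;> simp [h1, h2]
  set n : V → ℝ := fun x => ∑ y, q x y with hn
  have hnn : ∀ x, 0 ≤ n x := fun x => Finset.sum_nonneg fun y _ => by simp only [hq]; split_ifs <;> norm_num
  have hqI : ∀ x y, q x y = i x * q x y := by
    intro x y; simp only [hi, hq]; by_cases h : p x y
    · simp [h, hpI x y h]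
    · simp [h]
  have hqs : ∀ x y, q x y = q y x := by
    intro x y; simp only [hq]; congr 1; exact propext ⟨hps x y, hps y x⟩
  have hqI' : ∀ x y, q x y = q x y * i y := by
    intro x y; rw [hqs x y, hqI y x]; simp only [hi]; split_ifs <;> simp
  have hqn : ∀ x y, q x y * n x = q x y * n y := by
    intro x y
    by_cases h : p x y
    · congr 1
      simp only [hn]
      refine Finset.sum_congr rfl fun z _ => ?_
      simp only [hq]; congr 1
      exact propext ⟨hpt y x z (hps _ _ h), hpt x y z h⟩
    · simp [hq, h]
  have hqq : ∀ x y, ∑ z, (n z)⁻¹ * (q z x * q z y) = q x y := by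
    intro x y
    by_cases h : p x y
    · have hx : 0 < n x := by
        refine Finset.sum_pos' (fun y _ => by simp only [hq]; split_ifs <;> norm_num)
          ⟨x, mem_univ x, by simp [hq, hpr x (hpI x y h)]⟩
      have : ∀ z, (n z)⁻¹ * (q z x * q z y) = (n x)⁻¹ * q x z := by
        intro z
        by_cases hz : p x z
        · have h1 : p z x := hps _ _ hz
          have h2 : p z y := hpt _ _ _ h1 h
          have h3 := hqn x z
          simp only [hq, hz, h1, h2, if_true, one_mul, mul_one] at h3 ⊢
          rw [h3]
        · have h1 : ¬ p z x := fun h' => hz (hps _ _ h')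
          simp [hq, hz, h1]
      rw [Finset.sum_congr rfl fun z _ => this z, ← Finset.mul_sum]
      change (n x)⁻¹ * n x = _
      rw [inv_mul_cancel₀ hx.ne']; simp [hq, h]
    · have : q x y = 0 := by simp [hq, h]
      rw [this]
      refine Finset.sum_eq_zero fun z _ => ?_
      by_cases h1 : p z x
      · have h2 : ¬ p z y := fun h' => h (hpt _ _ _ (hps _ _ h1) h')
        simp [hq, h2]
      · simp [hq, h1]
  have hpsd : ∀ f : V → ℝ, 0 ≤ ∑ x, ∑ y, q x y * f x * f y := by
    intro f
    have : ∑ x, ∑ y, q x y * f x * f y = ∑ z, (n z)⁻¹ * (∑ x, q z x * f x) ^ 2 := by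
      have h1 : ∀ z, (n z)⁻¹ * (∑ x, q z x * f x) ^ 2 =
          ∑ x, ∑ y, (n z)⁻¹ * (q z x * q z y) * f x * f y := by
        intro z
        rw [sq, Finset.sum_mul_sum, Finset.mul_sum]
        refine Finset.sum_congr rfl fun x _ => ?_
        rw [Finset.mul_sum]
        refine Finset.sum_congr rfl fun y _ => ?_
        ring
      simp only [h1]
      symm
      rw [Finset.sum_comm]
      refine Finset.sum_congr rfl fun x _ => ?_
      rw [Finset.sum_comm]
      refine Finset.sum_congr rfl fun y _ => ?_
      rw [← Finset.sum_mul, ← Finset.sum_mul, hqq x y]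
    rw [this]
    exact Finset.sum_nonneg fun z _ => mul_nonneg (inv_nonneg.2 (hnn z)) (sq_nonneg _)
  set G := ∑ x, i x * g x with hG
  set N := ∑ x, i x with hN
  set Pn := ∑ x, n x with hPn
  have hi0 : ∀ x, 0 ≤ i x := fun x => by simp only [hi]; split_ifs <;> norm_num
  have hN0 : 0 ≤ N := Finset.sum_nonneg fun x _ => hi0 x
  have hnI : ∀ x, n x ≤ i x * N := by
    intro x
    simp only [hn, hN, Finset.mul_sum]
    refine Finset.sum_le_sum fun y _ => ?_
    rw [hqI x y, hqI' x y]
    have : q x y ≤ 1 := by simp only [hq]; split_ifs <;> norm_num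
    have h1 := hi0 x; have h2 := hi0 y
    have : q x y * i y ≤ i y := by nlinarith
    nlinarith
  have hPN : Pn ≤ N * N := by
    calc Pn ≤ ∑ x, i x * N := Finset.sum_le_sum fun x _ => hnI x
      _ = N * N := by rw [← Finset.sum_mul]
  have hrow : ∀ x, ∑ y, A x y = i x * N - n x := by
    intro x; simp only [hA', Finset.sum_sub_distrib, hN, hn, Finset.mul_sum]
  have hng : ∑ x, n x * g x = N * G := by
    have : ∑ x, (i x * N - n x) * g x = N * G - ∑ x, n x * g x := by
      rw [hG, Finset.mul_sum, ← Finset.sum_sub_distrib]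
      refine Finset.sum_congr rfl fun x _ => ?_
      ring
    simp only [hrow] at hg
    linarith
  have hQ : ∑ x, ∑ y, A x y * g x * g y = G ^ 2 - ∑ x, ∑ y, q x y * g x * g y := by
    rw [hG, sq, Finset.sum_mul_sum]
    simp only [← Finset.sum_sub_distrib]
    refine Finset.sum_congr rfl fun x _ => Finset.sum_congr rfl fun y _ => ?_
    rw [hA']; ring
  have hshift : ∀ c : ℝ, ∑ x, ∑ y, q x y * (g x - c) * (g y - c) =
      ∑ x, ∑ y, q x y * g x * g y - 2 * c * (N * G) + c ^ 2 * Pn := by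
    intro c
    have e1 : ∑ x, ∑ y, q x y * g x = N * G := by
      rw [← hng]; refine Finset.sum_congr rfl fun x _ => ?_
      rw [← Finset.sum_mul]
    have e2 : ∑ x, ∑ y, q x y * g y = N * G := by
      rw [Finset.sum_comm, ← e1]
      refine Finset.sum_congr rfl fun x _ => Finset.sum_congr rfl fun y _ => ?_
      rw [hqs]
    have e3 : ∑ x, ∑ y, q x y = Pn := rfl
    have : 2 * c * (N * G) = c * (N * G) + c * (N * G) := by ring
    rw [this]
    nth_rewrite 1 [← e1]
    rw [← e2, ← e3]
    simp only [Finset.mul_sum, ← Finset.sum_add_distrib, ← Finset.sum_sub_distrib]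
    refine Finset.sum_congr rfl fun x _ => Finset.sum_congr rfl fun y _ => ?_
    ring
  have h1 := hpsd (fun x => g x - G / N)
  simp only [hshift] at h1
  rw [hQ]
  rcases hN0.eq_or_lt with h0 | h0
  · have : G = 0 := by
      have h2 : ∀ x, i x = 0 := by
        have h3 := h0.symm
        rw [hN, Finset.sum_eq_zero_iff_of_nonneg fun x _ => hi0 x] at h3
        exact fun x => h3 x (mem_univ x)
      rw [hG]; exact Finset.sum_eq_zero fun x _ => by rw [h2 x, zero_mul]
    have := hpsd g
    have hG2 : G ^ 2 = 0 := by rw [‹G = 0›]; norm_num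
    linarith
  · have e1 : 2 * (G / N) * (N * G) = 2 * G ^ 2 := by field_simp
    have e2 : (G / N) ^ 2 * Pn ≤ G ^ 2 := by
      calc (G / N) ^ 2 * Pn ≤ (G / N) ^ 2 * (N * N) := by gcongr
        _ = G ^ 2 := by field_simp
    rw [e1] at h1
    linarith

structure IsMat {E : Type*} [DecidableEq E] (Ind : Finset E → Prop) (r : ℕ) : Prop where
  down : ∀ S T : Finset E, T ⊆ S → Ind S → Ind T
  exch : ∀ S T : Finset E, Ind S → Ind T → S.card < T.card → ∃ e ∈ T \ S, Ind (insert e S)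
  basis : ∃ B : Finset E, Ind B ∧ B.card = r

section mat
variable {E : Type*} [Fintype E] [DecidableEq E] {Ind : Finset E → Prop} {r : ℕ}

/-- bases containing `S` -/
noncomputable def bs (Ind : Finset E → Prop) (r : ℕ) (S : Finset E) : Finset (Finset E) :=
  univ.filter (fun B => (Ind B ∧ B.card = r) ∧ S ⊆ B)

lemma mem_bs {S B : Finset E} : B ∈ bs Ind r S ↔ (Ind B ∧ B.card = r) ∧ S ⊆ B := by
  simp [bs]

lemma bs_nonempty (hM : IsMat Ind r) : ∀ (m : ℕ) (S : Finset E), Ind S → S.card + m = r →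
    (bs Ind r S).Nonempty := by
  intro m
  induction m with
  | zero => intro S hS hc; exact ⟨S, mem_bs.2 ⟨⟨hS, by simpa using hc⟩, subset_rfl⟩⟩
  | succ m ih =>
    intro S hS hc
    obtain ⟨B, hB, hBc⟩ := hM.basis
    obtain ⟨e, he, hI⟩ := hM.exch S B hS hB (by omega)
    have heS : e ∉ S := (mem_sdiff.1 he).2
    obtain ⟨C, hC⟩ := ih (insert e S) hI (by rw [card_insert_of_notMem heS]; omega)
    rw [mem_bs] at hC
    exact ⟨C, mem_bs.2 ⟨hC.1, (subset_insert _ _).trans hC.2⟩⟩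

lemma ind_of_bs (hM : IsMat Ind r) {S : Finset E} (h : (bs Ind r S).Nonempty) : Ind S := by
  obtain ⟨B, hB⟩ := h
  rw [mem_bs] at hB
  exact hM.down _ _ hB.2 hB.1.1

lemma bs_swap (S : Finset E) (F : E → Finset E → ℝ) :
    ∑ z, (if z ∈ S then 0 else ∑ B ∈ bs Ind r (insert z S), F z B) =
      ∑ B ∈ bs Ind r S, ∑ z ∈ B \ S, F z B := by
  have h1 : ∀ z, (if z ∈ S then 0 else ∑ B ∈ bs Ind r (insert z S), F z B) =
      ∑ B ∈ bs Ind r S, if z ∈ B \ S then F z B else 0 := by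
    intro z
    split_ifs with h
    · symm; apply Finset.sum_eq_zero; intro B _; simp [h]
    · rw [← Finset.sum_filter]
      apply Finset.sum_congr _ (fun _ _ => rfl)
      ext B
      simp only [mem_bs, mem_filter, mem_sdiff, insert_subset_iff]
      tauto
  simp only [h1]
  rw [Finset.sum_comm]
  refine Finset.sum_congr rfl fun B _ => ?_
  rw [← Finset.sum_filter]
  congr 1
  ext x; simp

noncomputable def Qf (Ind : Finset E → Prop) (r : ℕ) (S : Finset E) (g : E → ℝ) : ℝ :=
  ∑ B ∈ bs Ind r S, ((∑ x ∈ B \ S, g x) ^ 2 - ∑ x ∈ B \ S, g x ^ 2)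

noncomputable def G1 (Ind : Finset E → Prop) (r : ℕ) (S : Finset E) (g : E → ℝ) : ℝ :=
  ∑ B ∈ bs Ind r S, ∑ x ∈ B \ S, g x

noncomputable def Nf (Ind : Finset E → Prop) (r : ℕ) (S : Finset E) : ℝ := ((bs Ind r S).card : ℝ)

noncomputable def Af (Ind : Finset E → Prop) (r : ℕ) (S : Finset E) (x y : E) : ℝ :=
  ∑ B ∈ bs Ind r S, if x ≠ y ∧ x ∈ B \ S ∧ y ∈ B \ S then 1 else 0

lemma card_sdiff_bs {S B : Finset E} {m : ℕ} (hc : S.card + m = r) (hB : B ∈ bs Ind r S) :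
    (B \ S).card = m := by
  rw [mem_bs] at hB
  rw [card_sdiff_of_subset hB.2]; omega

lemma G1_one {S : Finset E} {m : ℕ} (hc : S.card + m = r) (c : ℝ) :
    G1 Ind r S (fun _ => c) = m * Nf Ind r S * c := by
  rw [G1, Nf, Finset.sum_congr rfl (g := fun _ => (m : ℝ) * c)]
  · simp; ring
  · intro B hB
    simp [card_sdiff_bs hc hB]

lemma G1_eq (S : Finset E) (g : E → ℝ) :
    ∑ z, (if z ∈ S then 0 else Nf Ind r (insert z S) * g z) = G1 Ind r S g := by
  rw [G1, ← bs_swap]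
  refine Finset.sum_congr rfl fun z _ => ?_
  split_ifs
  · rfl
  · simp [Nf]

lemma Qf_shift {S : Finset E} {m : ℕ} (hc : S.card + m = r) (g : E → ℝ) (c : ℝ) :
    Qf Ind r S (fun x => g x - c) = Qf Ind r S g - 2 * c * (m - 1) * G1 Ind r S g
      + c ^ 2 * m * (m - 1) * Nf Ind r S := by
  have : c ^ 2 * m * (m - 1) * Nf Ind r S = ∑ B ∈ bs Ind r S, c ^ 2 * m * (m - 1) := by
    simp [Nf]; ring
  rw [this, Qf, Qf, G1, Finset.mul_sum, ← Finset.sum_sub_distrib, ← Finset.sum_add_distrib]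
  refine Finset.sum_congr rfl fun B hB => ?_
  have hcard := card_sdiff_bs hc hB
  have e1 : ∑ x ∈ B \ S, (g x - c) = ∑ x ∈ B \ S, g x - m * c := by
    rw [Finset.sum_sub_distrib]; simp [hcard]
  have e2 : ∑ x ∈ B \ S, (g x - c) ^ 2 = ∑ x ∈ B \ S, g x ^ 2 - 2 * c * ∑ x ∈ B \ S, g x
      + m * c ^ 2 := by
    have : (m : ℝ) * c ^ 2 = ∑ x ∈ B \ S, c ^ 2 := by simp [hcard]
    rw [this, Finset.mul_sum, ← Finset.sum_sub_distrib, ← Finset.sum_add_distrib]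
    refine Finset.sum_congr rfl fun x _ => ?_
    ring
  rw [e1, e2]; ring

lemma G1_shift {S : Finset E} {m : ℕ} (hc : S.card + m = r) (g : E → ℝ) (c : ℝ) :
    G1 Ind r S (fun x => g x - c) = G1 Ind r S g - m * Nf Ind r S * c := by
  rw [← G1_one hc, G1, G1, G1, ← Finset.sum_sub_distrib]
  refine Finset.sum_congr rfl fun B _ => ?_
  rw [Finset.sum_sub_distrib]

lemma Q_general {S : Finset E} {m : ℕ} (hm : 0 < m) (hc : S.card + m = r)
    (hN : 0 < Nf Ind r S)
    (h0 : ∀ g, G1 Ind r S g = 0 → Qf Ind r S g ≤ 0) (g : E → ℝ) :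
    Qf Ind r S g ≤ (m - 1) * (G1 Ind r S g ^ 2 / (m * Nf Ind r S)) := by
  have hm' : (0 : ℝ) < m := by exact_mod_cast hm
  have h1 := h0 (fun x => g x - G1 Ind r S g / (m * Nf Ind r S)) (by
    rw [G1_shift hc]; field_simp; ring)
  rw [Qf_shift hc] at h1
  have e : 2 * (G1 Ind r S g / (m * Nf Ind r S)) * (m - 1) * G1 Ind r S g
      - (G1 Ind r S g / (m * Nf Ind r S)) ^ 2 * m * (m - 1) * Nf Ind r S
      = (m - 1) * (G1 Ind r S g ^ 2 / (m * Nf Ind r S)) := by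
    field_simp; ring
  linarith

lemma Q_sum {S : Finset E} {m : ℕ} (hc : S.card + m = r) (g : E → ℝ) :
    ∑ z, (if z ∈ S then 0 else Qf Ind r (insert z S) g) = (m - 2) * Qf Ind r S g := by
  simp only [Qf]
  rw [bs_swap S (fun z B => ((∑ x ∈ B \ insert z S, g x) ^ 2 - ∑ x ∈ B \ insert z S, g x ^ 2)),
    Finset.mul_sum]
  refine Finset.sum_congr rfl fun B hB => ?_
  have hcard := card_sdiff_bs hc hB
  have h1 : ∀ z ∈ B \ S, ((∑ x ∈ B \ insert z S, g x) ^ 2 - ∑ x ∈ B \ insert z S, g x ^ 2)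
      = ((∑ x ∈ B \ S, g x) ^ 2 - ∑ x ∈ B \ S, g x ^ 2) + 2 * g z ^ 2
        - 2 * (∑ x ∈ B \ S, g x) * g z := by
    intro z hz
    have : B \ insert z S = (B \ S).erase z := by
      ext x; simp only [mem_sdiff, mem_insert, mem_erase]; tauto
    rw [this]
    have a1 := Finset.add_sum_erase _ g hz
    have a2 := Finset.add_sum_erase _ (fun x => g x ^ 2) hz
    rw [← a1, ← a2]; ring
  rw [Finset.sum_congr rfl h1, Finset.sum_sub_distrib, Finset.sum_add_distrib, ← Finset.mul_sum,
    ← Finset.mul_sum]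
  simp only [sum_const, hcard, nsmul_eq_mul]
  ring

lemma A_quad (S : Finset E) (g : E → ℝ) :
    ∑ x, ∑ y, Af Ind r S x y * g x * g y = Qf Ind r S g := by
  simp only [Af, Finset.sum_mul]
  have : ∀ x, ∑ y, ∑ B ∈ bs Ind r S, (if x ≠ y ∧ x ∈ B \ S ∧ y ∈ B \ S then (1 : ℝ) else 0) * g x * g y
    = ∑ B ∈ bs Ind r S, ∑ y, (if x ≠ y ∧ x ∈ B \ S ∧ y ∈ B \ S then (1 : ℝ) else 0) * g x * g y :=
    fun x => Finset.sum_comm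
  simp only [this]
  rw [Finset.sum_comm, Qf]
  refine Finset.sum_congr rfl fun B _ => ?_
  set u : E → ℝ := fun x => if x ∈ B \ S then g x else 0 with hu
  have e1 : ∑ x ∈ B \ S, g x = ∑ x, u x := by
    simp only [hu]; rw [Finset.sum_ite_mem, univ_inter]
  have e2 : ∑ x ∈ B \ S, g x ^ 2 = ∑ x, ∑ y, if x = y then u x * u y else 0 := by
    simp only [Finset.sum_ite_eq, mem_univ, if_true]
    rw [← univ_inter (B \ S), ← Finset.sum_ite_mem]
    refine Finset.sum_congr rfl fun x _ => ?_
    simp only [hu]; split_ifs <;> ring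
  rw [e1, e2, sq, Finset.sum_mul_sum, ← Finset.sum_sub_distrib]
  refine Finset.sum_congr rfl fun x _ => ?_
  rw [← Finset.sum_sub_distrib]
  refine Finset.sum_congr rfl fun y _ => ?_
  simp only [hu]
  by_cases h1 : x = y <;> by_cases h2 : x ∈ B \ S <;> by_cases h3 : y ∈ B \ S <;>
    simp only [h1, h2, h3, ne_eq, not_true, not_false_eq_true, if_true, if_false, true_and,
      false_and, and_true, and_false] <;> ring

lemma A_apply (S : Finset E) (g : E → ℝ) (x : E) :
    ∑ y, Af Ind r S x y * g y = if x ∈ S then 0 else G1 Ind r (insert x S) g := by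
  simp only [Af, Finset.sum_mul]
  rw [Finset.sum_comm]
  split_ifs with h
  · exact Finset.sum_eq_zero fun B _ => Finset.sum_eq_zero fun y _ => by simp [h]
  · rw [G1]
    have : bs Ind r (insert x S) = (bs Ind r S).filter (fun B => x ∈ B) := by
      ext B; simp only [mem_bs, mem_filter, insert_subset_iff]; tauto
    rw [this, Finset.sum_filter]
    refine Finset.sum_congr rfl fun B _ => ?_
    split_ifs with hx
    · rw [← univ_inter (B \ insert x S), ← Finset.sum_ite_mem]
      refine Finset.sum_congr rfl fun y _ => ?_
      have : (x ≠ y ∧ x ∈ B \ S ∧ y ∈ B \ S) ↔ y ∈ B \ insert x S := by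
        simp only [mem_sdiff, mem_insert, hx, h]
        constructor
        · rintro ⟨a, b, c, d⟩; exact ⟨c, by rintro (e | e); exacts [a e.symm, d e]⟩
        · rintro ⟨a, b⟩; exact ⟨fun e => b (Or.inl e.symm), ⟨trivial, not_false⟩, a, fun e => b (Or.inr e)⟩
      simp only [this]
      split_ifs <;> simp
    · exact Finset.sum_eq_zero fun y _ => by simp [hx]

lemma A_symm (S : Finset E) (x y : E) : Af Ind r S x y = Af Ind r S y x := by
  simp only [Af]
  refine Finset.sum_congr rfl fun B _ => ?_
  congr 1
  refine propext ⟨?_, ?_⟩ <;> rintro ⟨a, b, c⟩ <;> exact ⟨a.symm, c, b⟩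

lemma A_nonneg (S : Finset E) (x y : E) : 0 ≤ Af Ind r S x y :=
  Finset.sum_nonneg fun B _ => by split_ifs <;> norm_num

lemma A_pos (hM : IsMat Ind r) {S : Finset E} {m : ℕ} (hc : S.card + (m + 2) = r) {x y : E}
    (hx : x ∉ S) (hy : y ∉ S) (hxy : x ≠ y) (hI : Ind (insert x (insert y S))) :
    Af Ind r S x y ≠ 0 := by
  obtain ⟨B, hB⟩ := bs_nonempty hM m (insert x (insert y S)) hI (by
    rw [card_insert_of_notMem (by simp [hxy, hx]), card_insert_of_notMem hy]; omega)
  rw [mem_bs, insert_subset_iff, insert_subset_iff] at hB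
  refine ne_of_gt (Finset.sum_pos' (fun B _ => by split_ifs <;> norm_num) ⟨B, mem_bs.2 ⟨hB.1, hB.2.2.2⟩, ?_⟩)
  simp [hxy, hx, hy, hB.2.1, hB.2.2.1]

lemma A_zero (hM : IsMat Ind r) {S : Finset E} {x y : E}
    (h : ¬ (x ∉ S ∧ y ∉ S ∧ x ≠ y ∧ Ind (insert x (insert y S)))) :
    Af Ind r S x y = 0 := by
  refine Finset.sum_eq_zero fun B hB => ?_
  rw [if_neg]
  rintro ⟨h1, h2, h3⟩
  rw [mem_sdiff] at h2 h3
  rw [mem_bs] at hB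
  refine h ⟨h2.2, h3.2, h1, hM.down _ _ ?_ hB.1.1⟩
  rw [insert_subset_iff, insert_subset_iff]
  exact ⟨h2.1, h3.1, hB.2⟩

lemma par_trans (hM : IsMat Ind r) {S : Finset E} {x y z : E} (hx : x ∉ S) (hz : z ∉ S)
    (hIy : Ind (insert y S)) (hy : y ∉ S)
    (hxz : x ≠ z) (hIxz : Ind (insert x (insert z S)))
    (hnot : ¬ (x ≠ y ∧ Ind (insert x (insert y S)))) :
    z ≠ y ∧ Ind (insert z (insert y S)) := by
  by_cases hxy : x = y
  · subst hxy; exact ⟨hxz.symm, by rwa [insert_comm]⟩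
  · obtain ⟨e, he, hI⟩ := hM.exch _ _ hIy hIxz (by
      rw [card_insert_of_notMem hy, card_insert_of_notMem (a := x) (by simp [hxz, hx]),
        card_insert_of_notMem hz]
      omega)
    simp only [mem_sdiff, mem_insert, not_or] at he
    obtain ⟨h1 | h1 | h1, h2, h3⟩ := he
    · subst h1; exact absurd ⟨hxy, hI⟩ hnot
    · subst h1; exact ⟨h2, hI⟩
    · exact absurd h1 h3

lemma local_main (hM : IsMat Ind r) : ∀ (m : ℕ) (S : Finset E), Ind S → S.card + (m + 2) = r →
    ∀ g, G1 Ind r S g = 0 → Qf Ind r S g ≤ 0 := by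
  intro m
  induction m with
  | zero =>
    intro S hS hc g hg
    rw [← A_quad]
    refine rank_two_step (fun x => x ∉ S ∧ Ind (insert x S))
      (fun x y => (x ∉ S ∧ Ind (insert x S)) ∧ (y ∉ S ∧ Ind (insert y S)) ∧
        ¬ (x ≠ y ∧ Ind (insert x (insert y S)))) ?_ ?_ ?_ ?_ _ ?_ g ?_
    · intro x hx; exact ⟨hx, hx, by simp⟩
    · intro x y h; exact h.1
    · rintro x y ⟨h1, h2, h3⟩
      refine ⟨h2, h1, ?_⟩
      rintro ⟨h4, h5⟩; exact h3 ⟨h4.symm, by rwa [insert_comm]⟩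
    · rintro x y z ⟨h1, h2, h3⟩ ⟨-, h4, h5⟩
      refine ⟨h1, h4, ?_⟩
      rintro ⟨h6, h7⟩
      have := par_trans hM h1.1 h4.1 h2.2 h2.1 h6 h7 h3
      exact h5 ⟨this.1.symm, by rw [insert_comm]; exact this.2⟩
    · intro x y
      by_cases h : x ∉ S ∧ y ∉ S ∧ x ≠ y ∧ Ind (insert x (insert y S))
      · obtain ⟨hx, hy, hxy, hI⟩ := h
        have hIx : Ind (insert x S) := hM.down _ _ (insert_subset_insert _ (subset_insert _ _)) hI
        have hIy : Ind (insert y S) := hM.down _ _ (subset_insert _ _) hI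
        rw [if_pos ⟨⟨hx, hIx⟩, ⟨hy, hIy⟩⟩, if_neg (by simp [hxy, hI]), sub_zero]
        have hcard : (insert x (insert y S)).card = r := by
          rw [card_insert_of_notMem (by simp [hxy, hx]), card_insert_of_notMem hy]; omega
        rw [Af, Finset.sum_eq_single (insert x (insert y S))]
        · simp [hxy, hx, hy]
        · intro B hB hne
          rw [if_neg]
          rintro ⟨-, h2, h3⟩
          rw [mem_sdiff] at h2 h3
          rw [mem_bs] at hB
          refine hne (Finset.eq_of_subset_of_card_le ?_ ?_).symm
          · rw [insert_subset_iff, insert_subset_iff]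
            exact ⟨h2.1, h3.1, hB.2⟩
          · rw [hB.1.2, hcard]
        · intro h
          exact absurd (mem_bs.2 ⟨⟨hI, hcard⟩, (subset_insert _ _).trans (subset_insert _ _)⟩) h
      · rw [A_zero hM h]
        by_cases h2 : (x ∉ S ∧ Ind (insert x S)) ∧ (y ∉ S ∧ Ind (insert y S))
        · rw [if_pos h2, if_pos, sub_self]
          exact ⟨h2.1, h2.2, fun h3 => h ⟨h2.1.1, h2.2.1, h3⟩⟩
        · rw [if_neg h2, if_neg, sub_self]
          exact fun h3 => h2 ⟨h3.1, h3.2.1⟩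
    · rw [← hg, ← G1_eq]
      refine Finset.sum_congr rfl fun x _ => ?_
      have := A_apply (Ind := Ind) (r := r) S (fun _ => 1) x
      simp only [mul_one] at this
      rw [this]
      split_ifs with h
      · simp
      · rw [G1_one (m := 1) (by rw [card_insert_of_notMem h]; omega)]; simp
  | succ m ih =>
    intro S hS hc g hg
    rw [← A_quad]
    have hrow : ∀ x, ∑ y, Af Ind r S x y =
        if x ∈ S then 0 else ((m + 2 : ℕ) : ℝ) * Nf Ind r (insert x S) := by
      intro x
      have := A_apply (Ind := Ind) (r := r) S (fun _ => 1) x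
      simp only [mul_one] at this
      rw [this]
      split_ifs with h
      · rfl
      · rw [G1_one (m := m + 2) (by rw [card_insert_of_notMem h]; omega), mul_one]
    have hd : ∀ x, (if x ∈ S then 0 else ((m + 2 : ℕ) : ℝ) * Nf Ind r (insert x S)) ≠ 0 →
        x ∉ S ∧ Ind (insert x S) := by
      intro x hx
      split_ifs at hx with h
      · exact absurd rfl hx
      · refine ⟨h, ind_of_bs hM ?_⟩
        rw [Finset.nonempty_iff_ne_empty]
        intro h0
        apply hx
        simp [Nf, h0]
    refine spectral_step _ _ (A_symm S) (A_nonneg S) hrow ?_ ?_ g ?_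
    · intro φ hφ x y hx hy
      obtain ⟨hxS, hxI⟩ := hd x hx
      obtain ⟨hyS, hyI⟩ := hd y hy
      by_cases hxy : x ≠ y ∧ Ind (insert x (insert y S))
      · exact hφ x y (A_pos hM hc hxS hyS hxy.1 hxy.2)
      · obtain ⟨B, hB⟩ := bs_nonempty hM (m + 2) (insert x S) hxI (by
          rw [card_insert_of_notMem hxS]; omega)
        rw [mem_bs] at hB
        obtain ⟨z, hz, hzI⟩ := hM.exch _ _ hxI hB.1.1 (by
          rw [card_insert_of_notMem hxS, hB.1.2]; omega)
        simp only [mem_sdiff, mem_insert, not_or] at hz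
        have hxz : x ≠ z := fun h => hz.2.1 h.symm
        rw [insert_comm] at hzI
        have h1 := par_trans hM hxS hz.2.2 hyI hyS hxz hzI hxy
        rw [hφ x z (A_pos hM hc hxS hz.2.2 hxz hzI), hφ z y (A_pos hM hc hz.2.2 hyS h1.1 h1.2)]
    · intro φ
      rw [A_quad]
      have h1 := Q_sum (Ind := Ind) hc φ
      have hm : (0 : ℝ) < ((m + 1 : ℕ) : ℝ) := by positivity
      have h2 : ∀ z ∈ (univ : Finset E), (if z ∈ S then 0 else Qf Ind r (insert z S) φ) ≤
          ((m + 1 : ℕ) : ℝ) * ((∑ y, Af Ind r S z y * φ y) ^ 2 /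
            (if z ∈ S then 0 else ((m + 2 : ℕ) : ℝ) * Nf Ind r (insert z S))) := by
        intro z _
        rw [A_apply]
        split_ifs with h
        · simp
        · have hcz : (insert z S).card + (m + 2) = r := by rw [card_insert_of_notMem h]; omega
          by_cases hI : Ind (insert z S)
          · have := Q_general (Ind := Ind) (m := m + 2) (by omega) hcz (by
              rw [Nf]
              exact_mod_cast (bs_nonempty hM _ _ hI hcz).card_pos) (ih _ hI hcz) φ
            refine this.trans (le_of_eq ?_)
            congr 1
            push_cast; ring
          · have : bs Ind r (insert z S) = ∅ := by
              rw [← Finset.not_nonempty_iff_eq_empty]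
              exact fun h => hI (ind_of_bs hM h)
            simp [Qf, this, G1]
      have h3 := Finset.sum_le_sum h2
      rw [h1, ← Finset.mul_sum] at h3
      have e : (((m + 1 + 2 : ℕ) : ℝ) - 2) = ((m + 1 : ℕ) : ℝ) := by push_cast; ring
      rw [e] at h3
      exact le_of_mul_le_mul_left h3 hm
    · have : ∑ x, (if x ∈ S then 0 else ((m + 2 : ℕ) : ℝ) * Nf Ind r (insert x S)) * g x =
        ((m + 2 : ℕ) : ℝ) * G1 Ind r S g := by
        rw [← G1_eq, Finset.mul_sum]
        refine Finset.sum_congr rfl fun x _ => ?_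
        split_ifs <;> ring
      rw [this, hg, mul_zero]

noncomputable def VV (Ind : Finset E → Prop) (r : ℕ) (f : Finset E → ℝ) (S : Finset E) : ℝ :=
  ∑ B ∈ bs Ind r S, f B ^ 2 - (∑ B ∈ bs Ind r S, f B) ^ 2 / Nf Ind r S

lemma Nf_nonneg (S : Finset E) : 0 ≤ Nf Ind r S := by unfold Nf; positivity

lemma bs_empty_of_Nf {S : Finset E} (h : Nf Ind r S = 0) : bs Ind r S = ∅ := by
  rw [Nf] at h
  exact Finset.card_eq_zero.1 (by exact_mod_cast h)

lemma VV_nonneg (f : Finset E → ℝ) (S : Finset E) : 0 ≤ VV Ind r f S := by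
  rw [VV]
  rcases (Nf_nonneg (Ind := Ind) (r := r) S).eq_or_lt with h | h
  · rw [← h]; simp; exact Finset.sum_nonneg fun B _ => sq_nonneg _
  · rw [sub_nonneg, div_le_iff₀ h]
    have := sq_sum_le_card_mul_sum_sq (s := bs Ind r S) (f := f)
    rw [Nf, mul_comm]; exact this

lemma VV_shift (f : Finset E → ℝ) (S : Finset E) (c : ℝ) :
    VV Ind r (fun B => f B - c) S = VV Ind r f S := by
  rw [VV, VV]
  rcases (Nf_nonneg (Ind := Ind) (r := r) S).eq_or_lt with h | h
  · rw [bs_empty_of_Nf h.symm]; simp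
  · have e1 : ∑ B ∈ bs Ind r S, (f B - c) = ∑ B ∈ bs Ind r S, f B - Nf Ind r S * c := by
      rw [Finset.sum_sub_distrib]; simp [Nf]
    have e2 : ∑ B ∈ bs Ind r S, (f B - c) ^ 2 = ∑ B ∈ bs Ind r S, f B ^ 2
        - 2 * c * ∑ B ∈ bs Ind r S, f B + Nf Ind r S * c ^ 2 := by
      have : Nf Ind r S * c ^ 2 = ∑ B ∈ bs Ind r S, c ^ 2 := by simp [Nf]
      rw [this, Finset.mul_sum, ← Finset.sum_sub_distrib, ← Finset.sum_add_distrib]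
      refine Finset.sum_congr rfl fun x _ => ?_
      ring
    rw [e1, e2]
    field_simp
    ring

lemma step_zero (hM : IsMat Ind r) {S : Finset E} (hS : Ind S) {m : ℕ} (hc : S.card + (m + 2) = r)
    (f : Finset E → ℝ) (hf : ∑ B ∈ bs Ind r S, f B = 0) :
    ((m + 1 : ℕ) : ℝ) * VV Ind r f S ≤ ∑ z, if z ∈ S then 0 else VV Ind r f (insert z S) := by
  set F : E → ℝ := fun z => ∑ B ∈ bs Ind r (insert z S), f B with hF
  set g : E → ℝ := fun z => F z / Nf Ind r (insert z S) with hg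
  have hNg : ∀ z, Nf Ind r (insert z S) * g z = F z := by
    intro z
    by_cases h : Nf Ind r (insert z S) = 0
    · rw [h, zero_mul]; simp [hF, bs_empty_of_Nf h]
    · simp only [hg]; field_simp
  set X := ∑ z, if z ∈ S then 0 else F z ^ 2 / Nf Ind r (insert z S) with hX
  have hsq : ∑ z, (if z ∈ S then 0 else ∑ B ∈ bs Ind r (insert z S), f B ^ 2)
      = ((m + 2 : ℕ) : ℝ) * ∑ B ∈ bs Ind r S, f B ^ 2 := by
    rw [bs_swap S (fun z B => f B ^ 2), Finset.mul_sum]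
    refine Finset.sum_congr rfl fun B hB => ?_
    simp [card_sdiff_bs hc hB]
  have hV : ∑ z, (if z ∈ S then 0 else VV Ind r f (insert z S)) =
      ((m + 2 : ℕ) : ℝ) * ∑ B ∈ bs Ind r S, f B ^ 2 - X := by
    rw [← hsq, hX, ← Finset.sum_sub_distrib]
    refine Finset.sum_congr rfl fun z _ => ?_
    split_ifs
    · simp
    · rfl
  have hX1 : X = ∑ B ∈ bs Ind r S, f B * ∑ z ∈ B \ S, g z := by
    simp only [Finset.mul_sum]
    rw [← bs_swap S (fun z B => f B * g z), hX]
    refine Finset.sum_congr rfl fun z _ => ?_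
    split_ifs
    · rfl
    · rw [← Finset.sum_mul]; simp only [hg, hF]; ring
  have hX2 : X = ∑ B ∈ bs Ind r S, ∑ z ∈ B \ S, g z ^ 2 := by
    have := G1_eq (Ind := Ind) (r := r) S (fun z => g z ^ 2)
    rw [G1] at this
    rw [← this, hX]
    refine Finset.sum_congr rfl fun z _ => ?_
    split_ifs
    · rfl
    · rw [sq (g z), ← mul_assoc, hNg]; simp only [hg]; ring
  have hG : G1 Ind r S g = 0 := by
    rw [← G1_eq]
    simp only [hNg, hF]
    rw [bs_swap S (fun z B => f B)]
    have : ∀ B ∈ bs Ind r S, ∑ z ∈ B \ S, f B = ((m + 2 : ℕ) : ℝ) * f B := by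
      intro B hB
      simp [card_sdiff_bs hc hB]
    rw [Finset.sum_congr rfl this, ← Finset.mul_sum, hf, mul_zero]
  have hQ := local_main hM m S hS hc g hG
  rw [Qf, Finset.sum_sub_distrib, ← hX2] at hQ
  have hCS := Finset.sum_mul_sq_le_sq_mul_sq (bs Ind r S) f (fun B => ∑ z ∈ B \ S, g z)
  rw [← hX1] at hCS
  have hX0 : 0 ≤ X := by
    rw [hX2]; exact Finset.sum_nonneg fun B _ => Finset.sum_nonneg fun z _ => sq_nonneg _
  have hf0 : 0 ≤ ∑ B ∈ bs Ind r S, f B ^ 2 := Finset.sum_nonneg fun B _ => sq_nonneg _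
  have hfin : X ≤ ∑ B ∈ bs Ind r S, f B ^ 2 := by
    rcases hX0.eq_or_lt with h | h
    · rw [← h]; exact hf0
    · have : X * X ≤ (∑ B ∈ bs Ind r S, f B ^ 2) * X := by
        calc X * X = X ^ 2 := by ring
          _ ≤ _ := hCS
          _ ≤ _ := mul_le_mul_of_nonneg_left (by linarith) hf0
      exact le_of_mul_le_mul_right this h
  rw [hV, VV, hf]
  push_cast
  ring_nf
  linarith

lemma step_gen (hM : IsMat Ind r) {S : Finset E} {m : ℕ} (hc : S.card + (m + 2) = r)
    (f : Finset E → ℝ) :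
    ((m + 1 : ℕ) : ℝ) * VV Ind r f S ≤ ∑ z, if z ∈ S then 0 else VV Ind r f (insert z S) := by
  by_cases hS : Ind S
  · have hN : 0 < Nf Ind r S := by
      rw [Nf]; exact_mod_cast (bs_nonempty hM _ _ hS hc).card_pos
    have := step_zero hM hS hc (fun B => f B - (∑ B ∈ bs Ind r S, f B) / Nf Ind r S) (by
      rw [Finset.sum_sub_distrib, Finset.sum_const, nsmul_eq_mul]
      change _ - Nf Ind r S * _ = 0
      field_simp
      ring)
    simpa only [VV_shift] using this
  · have : bs Ind r S = ∅ := by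
      rw [← Finset.not_nonempty_iff_eq_empty]
      exact fun h => hS (ind_of_bs hM h)
    rw [VV, this]
    simp only [sum_empty]
    norm_num
    refine Finset.sum_nonneg fun z _ => ?_
    split_ifs
    · exact le_rfl
    · exact VV_nonneg _ _

lemma poincare (hM : IsMat Ind r) (f : Finset E → ℝ) : ∀ (m : ℕ) (S : Finset E),
    S.card + (m + 1) = r →
    VV Ind r f S ≤ ∑ T, if S ⊆ T ∧ T.card + 1 = r then VV Ind r f T else 0 := by
  intro m
  induction m with
  | zero =>
    intro S hc
    refine le_trans (le_of_eq ?_) (Finset.single_le_sum (f := fun T => if S ⊆ T ∧ T.card + 1 = r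
      then VV Ind r f T else 0) (fun T _ => ?_) (mem_univ S))
    · simp [show S.card + 1 = r by omega]
    · split_ifs
      · exact VV_nonneg _ _
      · exact le_rfl
  | succ m ih =>
    intro S hc
    have h1 := step_gen hM (m := m) (by omega) f
    have h2 : ∑ z, (if z ∈ S then 0 else VV Ind r f (insert z S)) ≤
        ∑ z, if z ∈ S then 0 else
          ∑ T, if insert z S ⊆ T ∧ T.card + 1 = r then VV Ind r f T else 0 := by
      refine Finset.sum_le_sum fun z _ => ?_
      split_ifs with h
      · exact le_rfl
      · exact ih _ (by rw [card_insert_of_notMem h]; omega)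
    have h3 : ∑ z, (if z ∈ S then 0 else
          ∑ T, if insert z S ⊆ T ∧ T.card + 1 = r then VV Ind r f T else 0) =
        ((m + 1 : ℕ) : ℝ) * ∑ T, if S ⊆ T ∧ T.card + 1 = r then VV Ind r f T else 0 := by
      have : ∀ z, (if z ∈ S then 0 else
          ∑ T, if insert z S ⊆ T ∧ T.card + 1 = r then VV Ind r f T else 0) =
          ∑ T, if z ∈ T \ S then (if S ⊆ T ∧ T.card + 1 = r then VV Ind r f T else 0) else 0 := by
        intro z
        split_ifs with h
        · symm; exact Finset.sum_eq_zero fun T _ => by simp [h]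
        · refine Finset.sum_congr rfl fun T _ => ?_
          by_cases hz : z ∈ T <;> simp [insert_subset_iff, hz, h]
      simp only [this]
      rw [Finset.sum_comm, Finset.mul_sum]
      refine Finset.sum_congr rfl fun T _ => ?_
      rw [Finset.sum_ite_mem, univ_inter, Finset.sum_const, nsmul_eq_mul]
      split_ifs with h
      · rw [card_sdiff_of_subset h.1]
        congr 2; omega
      · simp
    rw [h3] at h2
    exact le_of_mul_le_mul_left (h1.trans h2) (by positivity)

/-- incidence kernel -/
noncomputable def kk (Ind : Finset E → Prop) (r : ℕ) (T B : Finset E) : ℝ :=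
  if T.card + 1 = r ∧ B ∈ bs Ind r T then 1 else 0

lemma sum_kk {B : Finset E} (hB : Ind B ∧ B.card = r) (H : Finset E → ℝ) :
    ∑ T, kk Ind r T B * H T = ∑ e ∈ B, H (B.erase e) := by
  have h1 : ∑ e ∈ B, H (B.erase e) = ∑ T ∈ B.image B.erase, H T := by
    rw [Finset.sum_image]
    exact Finset.erase_injOn B
  rw [h1, ← univ_inter (B.image B.erase), ← Finset.sum_ite_mem]
  refine Finset.sum_congr rfl fun T _ => ?_
  have : (T.card + 1 = r ∧ B ∈ bs Ind r T) ↔ T ∈ B.image B.erase := by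
    rw [mem_bs, mem_image]
    constructor
    · rintro ⟨h, -, h3⟩
      obtain ⟨a, ha, rfl⟩ := Finset.exists_eq_insert_iff.2 ⟨h3, by rw [h, hB.2]⟩
      exact ⟨a, mem_insert_self _ _, erase_insert ha⟩
    · rintro ⟨e, he, rfl⟩
      refine ⟨?_, hB, erase_subset _ _⟩
      rw [card_erase_add_one he, hB.2]
  simp only [kk, this]
  split_ifs <;> simp

lemma kk_nonbasis {B : Finset E} (hB : ¬ (Ind B ∧ B.card = r)) (T : Finset E) :
    kk Ind r T B = 0 := by
  rw [kk, if_neg]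
  rintro ⟨-, h⟩
  exact hB (mem_bs.1 h).1

lemma bs_image {T : Finset E} (hT : T.card + 1 = r) :
    bs Ind r T = (univ.filter (fun f => f ∉ T ∧ Ind (insert f T))).image (fun f => insert f T) := by
  ext B
  simp only [mem_bs, mem_image, mem_filter, mem_univ, true_and]
  constructor
  · rintro ⟨h, h3⟩
    obtain ⟨a, ha, rfl⟩ := Finset.exists_eq_insert_iff.2 ⟨h3, by rw [hT, h.2]⟩
    exact ⟨a, ⟨ha, h.1⟩, rfl⟩
  · rintro ⟨e, ⟨h1, h2⟩, rfl⟩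
    exact ⟨⟨h2, by rw [card_insert_of_notMem h1, hT]⟩, subset_insert _ _⟩

lemma ins_inj (T : Finset E) : Set.InjOn (fun f => insert f T)
    (univ.filter (fun f => f ∉ T ∧ Ind (insert f T)) : Finset E) := by
  intro a ha b hb hab
  simp only [coe_filter, mem_univ, true_and, Set.mem_ofPred_eq] at ha hb
  have : a ∈ insert b T := by
    have h : insert a T = insert b T := hab
    rw [← h]; exact mem_insert_self _ _
  rcases mem_insert.1 this with h | h
  · exact h
  · exact absurd h ha.1

lemma inner_kk_sum {T : Finset E} (hT : T.card + 1 = r) (B' : Finset E) :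
    (∑ f ∈ univ.filter (fun f => f ∉ T ∧ Ind (insert f T)),
      (if B' = insert f T then
        ((univ.filter (fun g => g ∉ T ∧ Ind (insert g T))).card : ℝ)⁻¹ else 0)) =
      kk Ind r T B' * (Nf Ind r T)⁻¹ := by
  have hN : Nf Ind r T = ((univ.filter (fun g => g ∉ T ∧ Ind (insert g T))).card : ℝ) := by
    rw [Nf, bs_image hT, Finset.card_image_of_injOn (ins_inj T)]
  rw [← hN]
  have := Finset.sum_image (f := fun C => if B' = C then (Nf Ind r T)⁻¹ else 0)
    (ins_inj (Ind := Ind) T)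
  rw [← this, ← bs_image hT, Finset.sum_ite_eq, kk]
  by_cases h : B' ∈ bs Ind r T <;> simp [h, hT]

end mat

lemma mix_contract {ι : Type*} [Fintype ι] (P : ι → ι → ℝ) (hsym : ∀ a b, P a b = P b a)
    (hpsd : ∀ u : ι → ℝ, 0 ≤ ∑ a, ∑ b, P a b * u a * u b) (s : Finset ι)
    (hrow : ∀ b, ∑ a, P a b = if b ∈ s then 1 else 0) (hsupp : ∀ a, a ∉ s → ∀ b, P a b = 0)
    (ρ : ℝ) (hρ : 0 ≤ ρ)
    (hgap : ∀ u : ι → ℝ, (∀ a, a ∉ s → u a = 0) → ∑ a, u a = 0 →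
      ∑ a, ∑ b, P a b * u a * u b ≤ ρ * ∑ a, u a ^ 2)
    (u : ι → ℝ) (hu : ∀ a, a ∉ s → u a = 0) (hu0 : ∑ a, u a = 0) :
    (∀ a, a ∉ s → ∑ b, P a b * u b = 0) ∧ ∑ a, ∑ b, P a b * u b = 0 ∧
      ∑ a, (∑ b, P a b * u b) ^ 2 ≤ ρ ^ 2 * ∑ a, u a ^ 2 := by
  have h1 : ∀ a, a ∉ s → ∑ b, P a b * u b = 0 := fun a ha =>
    Finset.sum_eq_zero fun b _ => by rw [hsupp a ha b, zero_mul]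
  have h2 : ∑ a, ∑ b, P a b * u b = 0 := by
    rw [Finset.sum_comm, ← hu0]
    refine Finset.sum_congr rfl fun b _ => ?_
    rw [← Finset.sum_mul, hrow]
    split_ifs with h
    · rw [one_mul]
    · rw [hu b h, mul_zero]
  refine ⟨h1, h2, ?_⟩
  set v : ι → ℝ := fun a => ∑ b, P a b * u b with hv
  have hVV : ∑ a, ∑ b, P a b * v a * u b = ∑ a, v a ^ 2 := by
    refine Finset.sum_congr rfl fun a _ => ?_
    rw [sq]; nth_rewrite 3 [hv]; simp only; rw [Finset.mul_sum]
    refine Finset.sum_congr rfl fun b _ => ?_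
    ring
  have hVV' : ∑ a, ∑ b, P a b * u a * v b = ∑ a, v a ^ 2 := by
    rw [← hVV, Finset.sum_comm]
    refine Finset.sum_congr rfl fun b _ => Finset.sum_congr rfl fun a _ => ?_
    rw [hsym]; ring
  have gu := hgap u hu hu0
  have gv := hgap v h1 h2
  have pu := hpsd u
  have pv := hpsd v
  set X := ∑ a, v a ^ 2 with hX
  set a := ∑ a, ∑ b, P a b * v a * v b with ha
  set c := ∑ a, ∑ b, P a b * u a * u b with hc
  have hquad : ∀ x : ℝ, 0 ≤ a * (x * x) + (2 * X) * x + c := by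
    intro x
    have := hpsd (fun i => u i + x * v i)
    have e : ∑ a, ∑ b, P a b * (u a + x * v a) * (u b + x * v b) =
        a * (x * x) + (∑ a, ∑ b, P a b * v a * u b) * x + (∑ a, ∑ b, P a b * u a * v b) * x + c := by
      simp only [ha, hc, Finset.sum_mul, ← Finset.sum_add_distrib]
      refine Finset.sum_congr rfl fun i _ => Finset.sum_congr rfl fun j _ => ?_
      ring
    rw [e, hVV, hVV'] at this
    linarith
  have hdis := discrim_le_zero hquad
  rw [discrim] at hdis
  have hX0 : 0 ≤ X := Finset.sum_nonneg fun _ _ => sq_nonneg _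
  have hU0 : 0 ≤ ∑ a, u a ^ 2 := Finset.sum_nonneg fun _ _ => sq_nonneg _
  rcases hX0.eq_or_lt with h | h
  · rw [← h]; positivity
  · have : X * X ≤ (ρ ^ 2 * ∑ a, u a ^ 2) * X := by
      calc X * X ≤ a * c := by nlinarith
        _ ≤ (ρ * X) * (ρ * ∑ a, u a ^ 2) := mul_le_mul gv gu pu (by positivity)
        _ = _ := by ring
    exact le_of_mul_le_mul_right this h

section walk
variable {E : Type*} [Fintype E] [DecidableEq E] {Ind : Finset E → Prop} {r : ℕ}

noncomputable def Pk (Ind : Finset E → Prop) (r : ℕ) (B B' : Finset E) : ℝ :=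
  (r : ℝ)⁻¹ * ∑ T, kk Ind r T B * (kk Ind r T B' * (Nf Ind r T)⁻¹)

lemma Pk_eq (B B' : Finset E) : (if Ind B ∧ B.card = r then
        (r : ℝ)⁻¹ * ∑ e ∈ B,
          ∑ f ∈ univ.filter (fun f => f ∉ B.erase e ∧ Ind (insert f (B.erase e))),
            (if B' = insert f (B.erase e) then
              ((univ.filter (fun g => g ∉ B.erase e ∧
                Ind (insert g (B.erase e)))).card : ℝ)⁻¹ else 0)
      else 0) = Pk Ind r B B' := by
  rw [Pk]
  split_ifs with h
  · rw [sum_kk h]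
    congr 1
    refine Finset.sum_congr rfl fun e he => ?_
    exact inner_kk_sum (by rw [card_erase_add_one he, h.2]) B'
  · simp [kk_nonbasis h]

lemma Pk_symm (B B' : Finset E) : Pk Ind r B B' = Pk Ind r B' B := by
  simp only [Pk]; congr 1
  refine Finset.sum_congr rfl fun T _ => ?_
  ring

lemma Pk_nonbasis {B : Finset E} (h : ¬ (Ind B ∧ B.card = r)) (B' : Finset E) :
    Pk Ind r B B' = 0 := by
  simp [Pk, kk_nonbasis h]

lemma sum_kk_right (T : Finset E) (hT : T.card + 1 = r) (f : Finset E → ℝ) :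
    ∑ B, kk Ind r T B * f B = ∑ B ∈ bs Ind r T, f B := by
  rw [← univ_inter (bs Ind r T), ← Finset.sum_ite_mem]
  refine Finset.sum_congr rfl fun B _ => ?_
  simp [kk, hT]

lemma Pk_row (hr : 0 < r) (B : Finset E) :
    ∑ B', Pk Ind r B B' = if Ind B ∧ B.card = r then 1 else 0 := by
  split_ifs with h
  · simp only [Pk]
    rw [← Finset.mul_sum, Finset.sum_comm]
    have : ∀ T, ∑ B', kk Ind r T B * (kk Ind r T B' * (Nf Ind r T)⁻¹) = kk Ind r T B * 1 := by
      intro T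
      by_cases hT : T.card + 1 = r ∧ B ∈ bs Ind r T
      · rw [← Finset.mul_sum, sum_kk_right T hT.1]
        congr 1
        rw [Finset.sum_const, nsmul_eq_mul]
        refine mul_inv_cancel₀ ?_
        have := card_pos.2 ⟨B, hT.2⟩
        positivity
      · have : kk Ind r T B = 0 := by rw [kk, if_neg hT]
        simp [this]
    simp only [this]
    rw [sum_kk h]
    have : (r : ℝ) ≠ 0 := by positivity
    simp [h.2, this]
  · exact Finset.sum_eq_zero fun B' _ => Pk_nonbasis h B'

lemma Pk_quad (f : Finset E → ℝ) : ∑ B, ∑ B', Pk Ind r B B' * f B * f B' =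
    (r : ℝ)⁻¹ * ∑ T, if T.card + 1 = r then (∑ B ∈ bs Ind r T, f B) ^ 2 / Nf Ind r T else 0 := by
  have h1 : ∀ T, (if T.card + 1 = r then (∑ B ∈ bs Ind r T, f B) ^ 2 / Nf Ind r T else 0) =
      ∑ B, ∑ B', kk Ind r T B * (kk Ind r T B' * (Nf Ind r T)⁻¹) * f B * f B' := by
    intro T
    split_ifs with h
    · rw [← sum_kk_right T h, sq, Finset.sum_mul_sum, Finset.sum_div]
      refine Finset.sum_congr rfl fun B _ => ?_
      rw [Finset.sum_div]
      refine Finset.sum_congr rfl fun B' _ => ?_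
      ring
    · symm
      exact Finset.sum_eq_zero fun B _ => Finset.sum_eq_zero fun B' _ => by simp [kk, h]
  simp only [h1]
  have h2 : ∑ T, ∑ B, ∑ B', kk Ind r T B * (kk Ind r T B' * (Nf Ind r T)⁻¹) * f B * f B' =
      ∑ B, ∑ B', ∑ T, kk Ind r T B * (kk Ind r T B' * (Nf Ind r T)⁻¹) * f B * f B' := by
    rw [Finset.sum_comm]
    refine Finset.sum_congr rfl fun B _ => ?_
    rw [Finset.sum_comm]
  rw [h2, Finset.mul_sum]
  refine Finset.sum_congr rfl fun B _ => ?_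
  rw [Finset.mul_sum]
  refine Finset.sum_congr rfl fun B' _ => ?_
  rw [Pk, ← Finset.sum_mul, ← Finset.sum_mul]
  ring

lemma Pk_psd (f : Finset E → ℝ) : 0 ≤ ∑ B, ∑ B', Pk Ind r B B' * f B * f B' := by
  rw [Pk_quad]
  refine mul_nonneg (by positivity) (Finset.sum_nonneg fun T _ => ?_)
  split_ifs
  · exact div_nonneg (sq_nonneg _) (Nf_nonneg T)
  · exact le_rfl

lemma sum_bs_empty (f : Finset E → ℝ) : ∑ B ∈ bs Ind r ∅, f B =
    ∑ B, if Ind B ∧ B.card = r then f B else 0 := by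
  rw [← Finset.sum_filter]
  refine Finset.sum_congr ?_ fun _ _ => rfl
  ext B; simp [mem_bs]

/-- Poincaré inequality in unnormalised form. -/
lemma Pk_gap (hM : IsMat Ind r) (hr : 0 < r) (f : Finset E → ℝ) :
    (r : ℝ)⁻¹ * VV Ind r f ∅ ≤
      ∑ B ∈ bs Ind r ∅, f B ^ 2 - ∑ B, ∑ B', Pk Ind r B B' * f B * f B' := by
  have h1 := poincare hM f (r - 1) ∅ (by simp; omega)
  have hr0 : (r : ℝ) ≠ 0 := by positivity
  have h2 : ∑ T, (if ∅ ⊆ T ∧ T.card + 1 = r then VV Ind r f T else 0) =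
      r * ∑ B ∈ bs Ind r ∅, f B ^ 2 -
        ∑ T, if T.card + 1 = r then (∑ B ∈ bs Ind r T, f B) ^ 2 / Nf Ind r T else 0 := by
    have h3 : (r : ℝ) * ∑ B ∈ bs Ind r ∅, f B ^ 2 =
        ∑ T, if T.card + 1 = r then ∑ B ∈ bs Ind r T, f B ^ 2 else 0 := by
      have h4 : ∀ T : Finset E, (if T.card + 1 = r then ∑ B ∈ bs Ind r T, f B ^ 2 else 0) =
          ∑ B, kk Ind r T B * f B ^ 2 := by
        intro T
        split_ifs with h
        · rw [sum_kk_right T h]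
        · symm; exact Finset.sum_eq_zero fun B _ => by simp [kk, h]
      simp only [h4]
      rw [Finset.sum_comm, sum_bs_empty, Finset.mul_sum]
      refine Finset.sum_congr rfl fun B _ => ?_
      split_ifs with h
      · rw [sum_kk h (fun _ => f B ^ 2)]; simp [h.2]
      · simp [kk_nonbasis h]
    rw [h3, ← Finset.sum_sub_distrib]
    refine Finset.sum_congr rfl fun T _ => ?_
    simp only [empty_subset, true_and, VV]
    split_ifs <;> simp
  rw [h2] at h1
  rw [Pk_quad]
  have := mul_le_mul_of_nonneg_left h1 (by positivity : (0 : ℝ) ≤ (r : ℝ)⁻¹)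
  rw [mul_sub, inv_mul_cancel_left₀ hr0] at this
  exact this

end walk

/-- for a matroid of rank `r`, the bases-exchange walk has spectral
gap at least `1/r` (Poincaré inequality w.r.t. the uniform distribution on bases),
and hence it mixes: the total variation distance from uniform is at most `ε` after
`t ≥ r·log(|F|/ε)` steps (with `|F| ≤ n^r` this is the `O(r²·log n)` mixing bound). -/
theorem bases_exchange_walk_gap_and_mixing (E : Type*) [Fintype E] [DecidableEq E]
    (Ind : Finset E → Prop) (r : ℕ) (hr : 0 < r)
    (hempty : Ind ∅)
    (hdown : ∀ S T : Finset E, T ⊆ S → Ind S → Ind T)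
    (hexch : ∀ S T : Finset E, Ind S → Ind T → S.card < T.card →
      ∃ e ∈ T \ S, Ind (insert e S))
    (hrank : ∀ S : Finset E, Ind S → S.card ≤ r)
    (hbasis : ∃ B : Finset E, Ind B ∧ B.card = r)
    (P : Matrix (Finset E) (Finset E) ℝ)
    (hP : ∀ B B' : Finset E, P B B' = if Ind B ∧ B.card = r then
        (r : ℝ)⁻¹ * ∑ e ∈ B,
          ∑ f ∈ univ.filter (fun f => f ∉ B.erase e ∧ Ind (insert f (B.erase e))),
            (if B' = insert f (B.erase e) then
              ((univ.filter (fun g => g ∉ B.erase e ∧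
                Ind (insert g (B.erase e)))).card : ℝ)⁻¹ else 0)
      else 0)
    (πB : Finset E → ℝ)
    (hπ : ∀ B : Finset E, πB B = if Ind B ∧ B.card = r then
        ((univ.filter (fun B₀ : Finset E => Ind B₀ ∧ B₀.card = r)).card : ℝ)⁻¹ else 0) :
    (∀ f : Finset E → ℝ, (1 / (r : ℝ)) * varw πB f ≤ dirichletForm πB P f)
    ∧ ∀ B₀ : Finset E, Ind B₀ → B₀.card = r → ∀ ε : ℝ, 0 < ε → ∀ t : ℕ,
        (r : ℝ) * Real.log
            (((univ.filter (fun B : Finset E => Ind B ∧ B.card = r)).card : ℝ) / ε)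
          ≤ (t : ℝ) →
        (1 / 2) * ∑ B' : Finset E, |(P ^ t) B₀ B' - πB B'| ≤ ε := by
  have hM : IsMat Ind r := ⟨hdown, hexch, hbasis⟩
  have hPP : ∀ B B', P B B' = Pk Ind r B B' := by
    intro B B'; rw [hP, ← Pk_eq]
  have hbs : (univ.filter (fun B₀ : Finset E => Ind B₀ ∧ B₀.card = r)) = bs Ind r ∅ := by
    ext B; simp [mem_bs]
  have hr0 : (0 : ℝ) < r := by exact_mod_cast hr
  set N : ℝ := Nf Ind r ∅ with hN
  have hNpos : 1 ≤ N := by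
    rw [hN, Nf]
    exact_mod_cast (bs_nonempty hM r ∅ hempty (by simp)).card_pos
  have hN0 : 0 < N := by linarith
  rw [hbs]
  have hπ' : ∀ B, πB B = if Ind B ∧ B.card = r then N⁻¹ else 0 := by
    intro B; rw [hπ, hbs]; rfl
  have hmean : ∀ f : Finset E → ℝ, ∑ B, πB B * f B = N⁻¹ * ∑ B ∈ bs Ind r ∅, f B := by
    intro f
    rw [sum_bs_empty, Finset.mul_sum]
    refine Finset.sum_congr rfl fun B _ => ?_
    rw [hπ']; split_ifs <;> simp
  have hvar : ∀ f : Finset E → ℝ, varw πB f = N⁻¹ * VV Ind r f ∅ := by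
    intro f
    rw [varw, hmean f, hmean, ← VV_shift f ∅ (N⁻¹ * ∑ B ∈ bs Ind r ∅, f B), VV]
    have : ∑ B ∈ bs Ind r ∅, (f B - N⁻¹ * ∑ B ∈ bs Ind r ∅, f B) = 0 := by
      rw [Finset.sum_sub_distrib, Finset.sum_const, nsmul_eq_mul]
      change _ - N * _ = 0
      field_simp
      ring
    rw [this]; simp
  have hdir : ∀ f : Finset E → ℝ, dirichletForm πB P f = N⁻¹ *
      (∑ B ∈ bs Ind r ∅, f B ^ 2 - ∑ B, ∑ B', Pk Ind r B B' * f B * f B') := by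
    intro f
    have e0 : ∀ B B', πB B * P B B' = N⁻¹ * Pk Ind r B B' := by
      intro B B'
      rw [hπ', hPP]
      split_ifs with h
      · rfl
      · rw [Pk_nonbasis h]; simp
    have e1 : ∑ B, ∑ B', Pk Ind r B B' * f B ^ 2 = ∑ B ∈ bs Ind r ∅, f B ^ 2 := by
      rw [sum_bs_empty]
      refine Finset.sum_congr rfl fun B _ => ?_
      rw [← Finset.sum_mul, Pk_row hr]
      split_ifs <;> simp
    have e2 : ∑ B, ∑ B', Pk Ind r B B' * f B' ^ 2 = ∑ B ∈ bs Ind r ∅, f B ^ 2 := by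
      rw [Finset.sum_comm, ← e1]
      refine Finset.sum_congr rfl fun B _ => Finset.sum_congr rfl fun B' _ => ?_
      rw [Pk_symm]
    have e3 : ∑ B, ∑ B', Pk Ind r B B' * (f B - f B') ^ 2 =
        ∑ B, ∑ B', Pk Ind r B B' * f B ^ 2 + ∑ B, ∑ B', Pk Ind r B B' * f B' ^ 2
          - 2 * ∑ B, ∑ B', Pk Ind r B B' * f B * f B' := by
      simp only [Finset.mul_sum, ← Finset.sum_add_distrib, ← Finset.sum_sub_distrib]
      refine Finset.sum_congr rfl fun B _ => Finset.sum_congr rfl fun B' _ => ?_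
      ring
    rw [dirichletForm]
    simp only [e0, mul_assoc]
    simp only [← Finset.mul_sum]
    simp only [← mul_assoc]
    rw [e3, e1, e2]; ring
  have hgap : ∀ f : Finset E → ℝ, (1 / (r : ℝ)) * varw πB f ≤ dirichletForm πB P f := by
    intro f
    rw [hvar, hdir]
    have := mul_le_mul_of_nonneg_left (Pk_gap hM hr f) (inv_nonneg.2 hN0.le)
    calc 1 / (r : ℝ) * (N⁻¹ * VV Ind r f ∅) = N⁻¹ * ((r : ℝ)⁻¹ * VV Ind r f ∅) := by ring
      _ ≤ _ := this
  refine ⟨hgap, ?_⟩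
  intro B₀ hB₀ hB₀c ε hε t ht
  set ρ : ℝ := 1 - (r : ℝ)⁻¹ with hρ
  have hρ0 : 0 ≤ ρ := by
    have : (r : ℝ)⁻¹ ≤ 1 := inv_le_one_of_one_le₀ (by exact_mod_cast hr)
    linarith
  have hmem : ∀ B : Finset E, B ∈ bs Ind r ∅ ↔ Ind B ∧ B.card = r := by
    intro B; simp [mem_bs]
  have hsq : ∀ u : Finset E → ℝ, (∀ a, a ∉ bs Ind r ∅ → u a = 0) →
      ∀ q : ℝ → ℝ, q 0 = 0 → ∑ a ∈ bs Ind r ∅, q (u a) = ∑ a, q (u a) := by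
    intro u hu q hq
    refine Finset.sum_subset (subset_univ _) fun a _ ha => ?_
    rw [hu a ha, hq]
  have hcontract := mix_contract (Pk Ind r) Pk_symm Pk_psd (bs Ind r ∅)
    (by
      intro B
      simp only [hmem]
      rw [← Pk_row hr B]
      exact Finset.sum_congr rfl fun B' _ => Pk_symm _ _)
    (by intro B hB B'; exact Pk_nonbasis (fun h => hB ((hmem B).2 h)) B') ρ hρ0
    (by
      intro u hu hu0
      have h1 := Pk_gap hM hr u
      rw [VV, hsq u hu (fun x => x) rfl, hsq u hu (fun x => x ^ 2) (by simp), hu0] at h1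
      rw [hρ]
      simp at h1
      linarith)
  have hu : ∀ t : ℕ, (∀ a, a ∉ bs Ind r ∅ → (P ^ t) B₀ a - πB a = 0) ∧
      ∑ a, ((P ^ t) B₀ a - πB a) = 0 ∧ ∑ a, ((P ^ t) B₀ a - πB a) ^ 2 ≤ (ρ ^ t) ^ 2 := by
    intro t
    have hπsum : ∑ a, πB a = 1 := by
      have := hmean (fun _ => 1)
      simp only [mul_one, sum_const, nsmul_eq_mul] at this
      rw [this]
      exact inv_mul_cancel₀ hN0.ne'
    induction t with
    | zero =>
      have hB : B₀ ∈ bs Ind r ∅ := (hmem B₀).2 ⟨hB₀, hB₀c⟩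
      refine ⟨?_, ?_, ?_⟩
      · intro a ha
        have hne : B₀ ≠ a := fun h => ha (h ▸ hB)
        rw [pow_zero, Matrix.one_apply_ne hne, hπ', if_neg (fun h => ha ((hmem a).2 h)), sub_zero]
      · rw [Finset.sum_sub_distrib, hπsum]
        simp [Matrix.one_apply]
      · have e : ∀ a, ((P ^ 0) B₀ a - πB a) ^ 2 = (if B₀ = a then 1 - 2 * πB a else 0)
            + πB a * πB a := by
          intro a
          rw [pow_zero, Matrix.one_apply]
          split_ifs <;> ring
        simp only [e, Finset.sum_add_distrib, Finset.sum_ite_eq, mem_univ, if_true]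
        rw [hmean, hπ' B₀, if_pos ⟨hB₀, hB₀c⟩]
        have : ∑ B ∈ bs Ind r ∅, πB B = 1 := by
          rw [← hπsum]
          refine Finset.sum_subset (subset_univ _) fun a _ ha => ?_
          rw [hπ', if_neg (fun h => ha ((hmem a).2 h))]
        rw [this]
        have : 0 ≤ N⁻¹ := inv_nonneg.2 hN0.le
        norm_num
        linarith
    | succ t ih =>
      obtain ⟨i1, i2, i3⟩ := ih
      have hstep : ∀ a, (P ^ (t + 1)) B₀ a - πB a =
          ∑ b, Pk Ind r a b * ((P ^ t) B₀ b - πB b) := by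
        intro a
        rw [pow_succ, Matrix.mul_apply]
        simp only [mul_sub, Finset.sum_sub_distrib]
        congr 1
        · refine Finset.sum_congr rfl fun b _ => ?_
          rw [hPP, Pk_symm]; ring
        · have : ∀ b, Pk Ind r a b * πB b = N⁻¹ * Pk Ind r a b := by
            intro b
            rw [hπ']
            split_ifs with h
            · ring
            · rw [Pk_symm, Pk_nonbasis h]; simp
          simp only [this]
          rw [← Finset.mul_sum, Pk_row hr, hπ']
          split_ifs <;> simp
      obtain ⟨j1, j2, j3⟩ := hcontract _ i1 i2
      simp only [hstep]
      refine ⟨j1, j2, j3.trans ?_⟩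
      calc ρ ^ 2 * ∑ a, ((P ^ t) B₀ a - πB a) ^ 2 ≤ ρ ^ 2 * (ρ ^ t) ^ 2 := by gcongr
        _ = (ρ ^ (t + 1)) ^ 2 := by ring
  obtain ⟨u1, u2, u3⟩ := hu t
  have hρt : ρ ^ t ≤ ε / N := by
    have h1 : ρ ≤ Real.exp (-(r : ℝ)⁻¹) := by
      rw [hρ]
      have := Real.add_one_le_exp (-(r : ℝ)⁻¹)
      linarith
    calc ρ ^ t ≤ Real.exp (-(r : ℝ)⁻¹) ^ t := by gcongr
      _ = Real.exp (-((t : ℝ) * (r : ℝ)⁻¹)) := by rw [← Real.exp_nat_mul]; ring_nf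
      _ ≤ Real.exp (-Real.log (N / ε)) := by
          apply Real.exp_le_exp.2
          rw [neg_le_neg_iff, ← div_eq_mul_inv, le_div_iff₀ hr0, mul_comm]
          exact ht
      _ = ε / N := by
          rw [Real.exp_neg, Real.exp_log (by positivity), inv_div]
  have habs : (∑ a, |(P ^ t) B₀ a - πB a|) ≤ N * ρ ^ t := by
    refine le_trans (le_abs_self _) (abs_le_of_sq_le_sq ?_ (by positivity))
    rw [← hsq _ u1 (fun x => |x|) (by simp)]
    refine sq_sum_le_card_mul_sum_sq.trans ?_
    simp only [sq_abs]
    rw [hsq _ u1 (fun x => x ^ 2) (by simp)]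
    change N * _ ≤ _
    calc N * ∑ a, ((P ^ t) B₀ a - πB a) ^ 2 ≤ N * (ρ ^ t) ^ 2 := by gcongr
      _ ≤ N * N * (ρ ^ t) ^ 2 := by
          apply mul_le_mul_of_nonneg_right _ (sq_nonneg _)
          nlinarith
      _ = _ := by ring
  have h2 : N * ρ ^ t ≤ ε := by
    calc N * ρ ^ t ≤ N * (ε / N) := by gcongr
      _ = ε := by field_simp
  linarith
end
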